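/- arXiv:2401.00837 — 4 statements merged into one kernel-verified Lean document; each statement's English description precedes it below -/
import Mathlib

section
/- Let S ⊆ {-1,0,1}^d \ {0} be a mostly symmetric step set (symmetric over all but the d-th axis) that takes a step forwards and backwards in each coordinate. If S has zero drift (B(1) = A(1)), then the total weight s_n of walks of length n taking steps in S, starting at the origin, and never leaving ℕ^d satisfies s_n ∼ S(1)^n · n^{-d/2} · S(1)^{d/2} / (π^{d/2} · (b_1 ··· b_d)^{1/2}) as n → ∞. -/
open Finset Filter
open scoped Classical

noncomputable section

/-- Total weight of walks of length `n` with steps in `S` (weighted by `w`),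
starting at the origin and never leaving `ℕ^d`. -/
def walkWeight (d : ℕ) (S : Finset (Fin d → ℤ)) (w : (Fin d → ℤ) → ℝ) (n : ℕ) : ℝ :=
  ∑ f : Fin n → {i // i ∈ S},
    if ∀ m : ℕ, m ≤ n → ∀ j : Fin d,
        0 ≤ ∑ k ∈ Finset.univ.filter (fun k : Fin n => (k : ℕ) < m), ((f k : Fin d → ℤ) j)
    then ∏ k : Fin n, w (f k) else 0

/-- The step set `S` (with weights `w`) is symmetric over the `k`-th coordinate axis. -/
def SymmetricAxis (d : ℕ) (S : Finset (Fin d → ℤ)) (w : (Fin d → ℤ) → ℝ) (k : Fin d) : Prop :=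
  ∀ i ∈ S, Function.update i k (-(i k)) ∈ S ∧ w (Function.update i k (-(i k))) = w i

/-- probability that a simple walk from `h` stays nonnegative for `m` steps -/
def stayP : ℕ → ℤ → ℝ
  | 0, h => if 0 ≤ h then 1 else 0
  | m + 1, h => if 0 ≤ h then (stayP m (h + 1) + stayP m (h - 1)) / 2 else 0

/-- distribution of the simple walk -/
def distD : ℕ → ℤ → ℝ
  | 0, s => if s = 0 then 1 else 0
  | m + 1, s => (distD m (s - 1) + distD m (s + 1)) / 2

lemma stayP_neg (m : ℕ) (h : ℤ) (hh : h < 0) : stayP m h = 0 := by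
  cases m <;> simp [stayP, not_le.mpr hh]

lemma stayP_nonneg (m : ℕ) (h : ℤ) : 0 ≤ stayP m h := by
  induction m generalizing h with
  | zero => simp only [stayP]; split_ifs <;> norm_num
  | succ m ih =>
    simp only [stayP]; split_ifs
    · have := ih (h+1); have := ih (h-1); linarith
    · norm_num

lemma stayP_le_one (m : ℕ) (h : ℤ) : stayP m h ≤ 1 := by
  induction m generalizing h with
  | zero => simp only [stayP]; split_ifs <;> norm_num
  | succ m ih =>
    simp only [stayP]; split_ifs
    · have := ih (h+1); have := ih (h-1); linarith
    · norm_num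

lemma stayP_eq_sum (m : ℕ) (h : ℕ) :
    stayP m ((h : ℤ) - 1) = ∑ s ∈ Finset.range (2 * h), distD m ((s : ℤ) - h + 1) := by
  induction m generalizing h with
  | zero =>
    cases h with
    | zero => simp [stayP]
    | succ g =>
      have h1 : (0:ℤ) ≤ ((g+1 : ℕ) : ℤ) - 1 := by push_cast; omega
      simp only [stayP, distD, h1, if_true]
      rw [Finset.sum_eq_single g]
      · simp
      · intro b _ hb
        rw [if_neg]; push_cast; omega
      · intro hg; exfalso; apply hg; simp; omega
  | succ m ih =>
    cases h with
    | zero => simp [stayP]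
    | succ g =>
      have h1 : (0:ℤ) ≤ ((g+1 : ℕ) : ℤ) - 1 := by push_cast; omega
      simp only [stayP, distD, h1, if_true]
      have e1 := ih (g+2)
      have e2 := ih g
      have a1 : ((g+1 : ℕ) : ℤ) - 1 + 1 = ((g+2 : ℕ) : ℤ) - 1 := by push_cast; ring
      have a2 : ((g+1 : ℕ) : ℤ) - 1 - 1 = (g : ℤ) - 1 := by push_cast; ring
      rw [a1, a2, e1, e2, ← Finset.sum_div, Finset.sum_add_distrib]
      have b1 : 2 * (g+2) = 2 * (g+1) + 1 + 1 := by ring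
      have b2 : 2 * (g+1) = 2 * g + 1 + 1 := by ring
      congr 1
      rw [b1, Finset.sum_range_succ, Finset.sum_range_succ]
      have c1 : ∑ x ∈ Finset.range (2 * (g+1)), distD m ((x:ℤ) - ((g+2:ℕ):ℤ) + 1)
         = ∑ x ∈ Finset.range (2 * (g+1)), distD m ((x:ℤ) - ((g+1:ℕ):ℤ) + 1 - 1) := by
        apply Finset.sum_congr rfl; intro x _; congr 1; push_cast; ring
      rw [c1, add_assoc, add_assoc]
      congr 1
      rw [b2, Finset.sum_range_succ, Finset.sum_range_succ]
      have c2 : ∑ x ∈ Finset.range (2 * g), distD m ((x:ℤ) - (g:ℤ) + 1)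
         = ∑ x ∈ Finset.range (2 * g), distD m ((x:ℤ) - ((g+1:ℕ):ℤ) + 1 + 1) := by
        apply Finset.sum_congr rfl; intro x _; congr 1; push_cast; ring
      rw [c2]
      have d1 : ((2 * g + 1 + 1 : ℕ):ℤ) - ((g+2:ℕ):ℤ) + 1 = ((2 * g : ℕ):ℤ) - ((g+1:ℕ):ℤ) + 1 + 1 := by
        push_cast; ring
      have d2 : ((2 * g + 1 + 1 + 1 : ℕ):ℤ) - ((g+2:ℕ):ℤ) + 1 = ((2 * g + 1 : ℕ):ℤ) - ((g+1:ℕ):ℤ) + 1 + 1 := by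
        push_cast; ring
      rw [d1, d2]; ring

lemma stayP_zero_eq (m : ℕ) : stayP m 0 = distD m 0 + distD m 1 := by
  have := stayP_eq_sum m 1
  simpa [Finset.sum_range_succ] using this

lemma distD_lt (m : ℕ) (s : ℤ) (hs : s < -(m:ℤ)) : distD m s = 0 := by
  induction m generalizing s with
  | zero => simp only [distD]; rw [if_neg]; intro h; simp_all
  | succ m ih =>
    simp only [distD]
    push_cast at hs
    rw [ih _ (by omega), ih _ (by omega)]; simp

lemma distD_odd (m : ℕ) (s : ℤ) (hs : (s + m) % 2 = 1) : distD m s = 0 := by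
  induction m generalizing s with
  | zero => simp only [distD]; rw [if_neg]; intro h; simp_all
  | succ m ih =>
    simp only [distD]
    push_cast at hs
    rw [ih _ (by omega), ih _ (by omega)]; simp

lemma distD_choose (m j : ℕ) : distD m (2 * (j:ℤ) - m) = (m.choose j : ℝ) / 2 ^ m := by
  induction m generalizing j with
  | zero =>
    cases j with
    | zero => simp [distD]
    | succ j => simp only [distD]; rw [if_neg]; simp; push_cast; omega
  | succ m ih =>
    simp only [distD]
    cases j with
    | zero =>
      rw [distD_lt m _ (by push_cast; omega)]
      have := ih 0
      rw [show (2 * ((0:ℕ):ℤ) - ((m+1:ℕ):ℤ) + 1) = 2 * ((0:ℕ):ℤ) - m by push_cast; ring, this]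
      simp; field_simp; ring
    | succ j =>
      rw [show (2 * ((j+1:ℕ):ℤ) - ((m+1:ℕ):ℤ) + 1) = 2 * ((j+1:ℕ):ℤ) - m by push_cast; ring,
        show (2 * ((j+1:ℕ):ℤ) - ((m+1:ℕ):ℤ) - 1) = 2 * ((j:ℕ):ℤ) - m by push_cast; ring, ih, ih,
        Nat.choose_succ_succ]
      push_cast; field_simp; ring

lemma stayP_closed (m : ℕ) :
    stayP m 0 = (((m+1)/2).centralBinom : ℝ) / 4 ^ ((m+1)/2) := by
  rw [stayP_zero_eq]
  rcases Nat.even_or_odd' m with ⟨n, rfl | rfl⟩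
  · rw [distD_odd (2*n) 1 (by push_cast; omega)]
    have := distD_choose (2*n) n
    rw [show (2 * (n:ℤ) - ((2*n:ℕ):ℤ)) = 0 by push_cast; ring] at this
    rw [this, show (2*n+1)/2 = n by omega, Nat.centralBinom, pow_mul]; norm_num
  · rw [distD_odd (2*n+1) 0 (by push_cast; omega)]
    have := distD_choose (2*n+1) (n+1)
    rw [show (2 * ((n+1:ℕ):ℤ) - ((2*n+1:ℕ):ℤ)) = 1 by push_cast; ring] at this
    rw [this, show (2*n+1+1)/2 = n+1 by omega, Nat.centralBinom]
    have h2 : (2*(n+1)).choose (n+1) = 2 * (2*n+1).choose (n+1) := by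
      rw [show 2*(n+1) = (2*n+1)+1 by ring, Nat.choose_succ_succ,
        Nat.choose_symm_of_eq_add (show 2*n+1 = (n+1)+n by ring)]
      ring
    rw [h2, show (4:ℝ) = 2^2 by norm_num, ← pow_mul]
    push_cast
    rw [show 2*(n+1) = (2*n+1)+1 by ring, pow_succ (2:ℝ) (2*n+1)]
    field_simp
    ring

lemma central_tendsto : Tendsto (fun n : ℕ => Real.sqrt (2*n+1) * ((n.centralBinom : ℝ) / 4 ^ n))
    atTop (nhds (Real.sqrt (2/Real.pi))) := by
  have h := Real.Wallis.tendsto_W_nhds_pi_div_two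
  have h2 := (h.inv₀ (by positivity)).sqrt
  rw [inv_div] at h2
  refine h2.congr fun n => ?_
  rw [Real.Wallis.W_eq_factorial_ratio]
  have hc : (n.centralBinom : ℝ) = ((2*n).factorial : ℝ) / (n.factorial)^2 := by
    rw [Nat.centralBinom, Nat.cast_choose ℝ (by omega), show 2*n-n = n by omega]; ring
  rw [hc, Real.sqrt_eq_iff_mul_self_eq (by positivity) (by positivity)]
  have := Real.mul_self_sqrt (show (0:ℝ) ≤ 2*n+1 by positivity)
  have h4 : (2:ℝ)^(4*n) = 4^n*4^n := by
    rw [show 4*n = 2*n+2*n by ring, pow_add, pow_mul]; norm_num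
  rw [h4]
  have h5 : ((n.factorial : ℕ):ℝ) ≠ 0 := by positivity
  have h6 : (((2*n).factorial : ℕ):ℝ) ≠ 0 := by positivity
  field_simp
  rw [Real.sq_sqrt (by positivity)]

lemma stayP_tendsto : Tendsto (fun m : ℕ => Real.sqrt m * stayP m 0)
    atTop (nhds (Real.sqrt (2/Real.pi))) := by
  have hk : Tendsto (fun m : ℕ => (m+1)/2) atTop atTop := by
    rw [tendsto_atTop]; intro b
    filter_upwards [eventually_ge_atTop (2*b)] with m hm; omega
  have h1 := central_tendsto.comp hk
  have h2 : Tendsto (fun m : ℕ => Real.sqrt ((m:ℝ) / (2*((m+1)/2 : ℕ)+1))) atTop (nhds 1) := by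
    suffices hs : Tendsto (fun m : ℕ => ((m:ℝ) / (2*((m+1)/2 : ℕ)+1))) atTop (nhds 1) by
      simpa using hs.sqrt
    have hlow : Tendsto (fun m : ℕ => 1 - 2 / ((m:ℝ)+2)) atTop (nhds 1) := by
      have : Tendsto (fun m : ℕ => 2 / ((m:ℝ)+2)) atTop (nhds 0) := by
        apply Tendsto.div_atTop tendsto_const_nhds
        exact tendsto_atTop_add_const_right _ _ tendsto_natCast_atTop_atTop
      simpa using this.const_sub 1
    refine tendsto_of_tendsto_of_tendsto_of_le_of_le hlow tendsto_const_nhds ?_ ?_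
    · intro m
      have a : (2*(((m+1)/2 : ℕ):ℝ)+1) ≤ (m:ℝ)+2 := by
        exact_mod_cast (by omega : 2*((m+1)/2)+1 ≤ m+2)
      have : (1:ℝ) - 2/((m:ℝ)+2) = m/((m:ℝ)+2) := by field_simp; ring
      simp only [this]
      apply div_le_div_of_nonneg_left (by positivity) (by positivity) a
    · intro m
      have a : (m:ℝ) ≤ (2*(((m+1)/2 : ℕ):ℝ)+1) := by
        exact_mod_cast (by omega : m ≤ 2*((m+1)/2)+1)
      exact div_le_one_of_le₀ a (by positivity)
  have h3 := h2.mul h1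
  rw [one_mul] at h3
  refine h3.congr fun m => ?_
  simp only [Function.comp]
  rw [stayP_closed, Real.sqrt_div (by positivity)]
  have : Real.sqrt (2*(((m+1)/2 : ℕ):ℝ)+1) ≠ 0 := by positivity
  field_simp

/-- indicator that the walk started at `y` stays nonnegative -/
def nnW (n : ℕ) (y : ℤ) (c : Fin n → ℤ) : ℝ :=
  if ∀ m : ℕ, m ≤ n → 0 ≤ y + ∑ k ∈ Finset.univ.filter (fun k : Fin n => (k : ℕ) < m), c k
  then 1 else 0

/-- number of nonzero steps -/
def cnt (n : ℕ) (c : Fin n → ℤ) : ℕ := ∑ k : Fin n, if c k ≠ 0 then 1 else 0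

lemma nnW_zero (y : ℤ) (c : Fin 0 → ℤ) : nnW 0 y c = if 0 ≤ y then 1 else 0 := by
  simp [nnW]

lemma nnW_nonneg (n : ℕ) (y : ℤ) (c : Fin n → ℤ) : 0 ≤ nnW n y c := by
  unfold nnW; split_ifs <;> norm_num

lemma nnW_le_one (n : ℕ) (y : ℤ) (c : Fin n → ℤ) : nnW n y c ≤ 1 := by
  unfold nnW; split_ifs <;> norm_num

lemma nnW_succ (n : ℕ) (y : ℤ) (c : Fin (n+1) → ℤ) :
    nnW (n+1) y c = (if 0 ≤ y then 1 else 0) * nnW n (y + c 0) (fun k => c k.succ) := by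
  have key : (∀ m : ℕ, m ≤ n+1 →
        0 ≤ y + ∑ k ∈ Finset.univ.filter (fun k : Fin (n+1) => (k : ℕ) < m), c k) ↔
      (0 ≤ y ∧ ∀ m : ℕ, m ≤ n →
        0 ≤ (y + c 0) + ∑ k ∈ Finset.univ.filter (fun k : Fin n => (k : ℕ) < m), c k.succ) := by
    have hs : ∀ m : ℕ, ∑ k ∈ Finset.univ.filter (fun k : Fin (n+1) => (k : ℕ) < m+1), c k
        = c 0 + ∑ k ∈ Finset.univ.filter (fun k : Fin n => (k : ℕ) < m), c k.succ := by
      intro m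
      rw [Finset.sum_filter, Finset.sum_filter, Fin.sum_univ_succ]
      simp
    constructor
    · intro h
      refine ⟨by simpa using h 0 (by omega), fun m hm => ?_⟩
      have := h (m+1) (by omega)
      rw [hs] at this; linarith
    · rintro ⟨h0, h⟩ m hm
      cases m with
      | zero => simpa using h0
      | succ m => rw [hs]; have := h m (by omega); linarith
  unfold nnW
  by_cases h0 : 0 ≤ y
  · rw [if_pos h0, one_mul]
    exact if_congr (key.trans (and_iff_right h0)) rfl rfl
  · rw [if_neg h0, zero_mul, if_neg]
    rw [key]; tauto

lemma cnt_succ (n : ℕ) (c : Fin (n+1) → ℤ) :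
    cnt (n+1) c = (if c 0 ≠ 0 then 1 else 0) + cnt n (fun k => c k.succ) := by
  unfold cnt; rw [Fin.sum_univ_succ]

lemma sum_cons_eq {ι : Type*} [Fintype ι] (n : ℕ) (F : (Fin (n+1) → ι) → ℝ) :
    ∑ f, F f = ∑ i, ∑ f : Fin n → ι, F (Fin.cons i f) := by
  rw [← (Fin.consEquiv (fun _ => ι)).sum_comp, Fintype.sum_prod_type]
  rfl

lemma stayP_avg (h z : ℤ) (N : ℕ) (hz : z = -1 ∨ z = 0 ∨ z = 1) :
    ((if 0 ≤ h then (1:ℝ) else 0) * stayP N (h + z) +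
      (if 0 ≤ h then (1:ℝ) else 0) * stayP N (h + -z)) / 2
      = stayP ((if z ≠ 0 then 1 else 0) + N) h := by
  by_cases h0 : 0 ≤ h
  · rcases hz with rfl | rfl | rfl
    · rw [if_pos h0, if_pos (by norm_num), add_comm 1 N, stayP, if_pos h0]
      rw [show h + - -1 = h + 1 by ring, show h + -1 = h - 1 by ring]; ring
    · simp [h0]
    · rw [if_pos h0, if_pos (by norm_num), add_comm 1 N, stayP, if_pos h0]
      rw [show h + -1 = h - 1 by ring]; ring
  · rw [if_neg h0, stayP_neg _ h (not_le.mp h0)]; simp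

lemma symmetrize {ι κ : Type*} [Fintype ι] [Fintype κ] (w : ι → ℝ) (x : ι → κ → ℤ) (y : ι → ℤ)
    (hx : ∀ i k, x i k = -1 ∨ x i k = 0 ∨ x i k = 1)
    (hA : ∀ (H : ℤ → ℝ) (φ : κ → ℤ → ℝ), ∑ i, w i * (H (y i) * ∏ k, φ k (x i k)) =
      ∑ i, w i * (H (y i) * ∏ k, (φ k (x i k) + φ k (-x i k)) / 2))
    (n : ℕ) (y0 : ℤ) (x0 : κ → ℤ) :
    ∑ f : Fin n → ι, (∏ m, w (f m)) *
        (nnW n y0 (fun m => y (f m)) * ∏ k, nnW n (x0 k) (fun m => x (f m) k)) =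
    ∑ f : Fin n → ι, (∏ m, w (f m)) *
        (nnW n y0 (fun m => y (f m)) * ∏ k, stayP (cnt n (fun m => x (f m) k)) (x0 k)) := by
  induction n generalizing y0 x0 with
  | zero => simp [nnW_zero, cnt, stayP]
  | succ n ih =>
    rw [sum_cons_eq, sum_cons_eq]
    simp only [Fin.prod_univ_succ, Fin.cons_zero, Fin.cons_succ, nnW_succ, cnt_succ]
    have e1 : ∀ i, ∑ f : Fin n → ι, (w i * ∏ m, w (f m)) *
        (((if 0 ≤ y0 then 1 else 0) * nnW n (y0 + y i) (fun m => y (f m))) *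
          ∏ k, ((if 0 ≤ x0 k then 1 else 0) * nnW n (x0 k + x i k) (fun m => x (f m) k)))
        = ∑ f : Fin n → ι, (∏ m, w (f m)) * (w i *
          ((fun z => (if 0 ≤ y0 then 1 else 0) * nnW n (y0 + z) (fun m => y (f m))) (y i) *
          ∏ k, (fun k z => (if 0 ≤ x0 k then 1 else 0) *
            stayP (cnt n (fun m => x (f m) k)) (x0 k + z)) k (x i k))) := by
      intro i
      have := congrArg (fun t => (w i * (if 0 ≤ y0 then 1 else 0) *
        ∏ k, (if 0 ≤ x0 k then (1:ℝ) else 0)) * t) (ih (y0 + y i) (fun k => x0 k + x i k))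
      simp only [Finset.mul_sum] at this
      simp only [Finset.prod_mul_distrib]
      refine Eq.trans (Finset.sum_congr rfl fun f _ => ?_)
        (this.trans (Finset.sum_congr rfl fun f _ => ?_)) <;> ring
    rw [Finset.sum_congr rfl fun i _ => e1 i, Finset.sum_comm]
    refine Eq.trans (Finset.sum_congr rfl fun f _ => (Finset.mul_sum _ _ _).symm.trans
      (congrArg (fun t => (∏ m, w (f m)) * t) (hA
      (fun z => (if 0 ≤ y0 then 1 else 0) * nnW n (y0 + z) (fun m => y (f m)))
      (fun k z => (if 0 ≤ x0 k then 1 else 0) *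
            stayP (cnt n (fun m => x (f m) k)) (x0 k + z))))) ?_
    simp only [Finset.mul_sum]
    rw [Finset.sum_comm]
    refine Finset.sum_congr rfl fun i _ => Finset.sum_congr rfl fun f _ => ?_
    simp only [stayP_avg _ _ _ (hx i _)]
    ring

lemma chernoff {ι : Type*} [Fintype ι] (p : ι → ℝ) (hp : ∀ i, 0 ≤ p i) (hp1 : ∑ i, p i = 1)
    (g : ι → ℝ) (hg : ∀ i, |g i| ≤ 1) (hg0 : ∑ i, p i * g i = 0) (ε : ℝ) (he : 0 ≤ ε) (he2 : ε ≤ 2)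
    (n : ℕ) :
    ∑ f : Fin n → ι, (∏ m, p (f m)) * (if ε * n ≤ ∑ m, g (f m) then 1 else 0)
      ≤ (Real.exp (-(ε^2/4))) ^ n := by
  have hone : ∑ i, p i * Real.exp (ε/2 * g i) ≤ Real.exp ((ε/2)^2) := by
    have : ∀ i, p i * Real.exp (ε/2 * g i) ≤ p i * (1 + (ε/2)^2) + (ε/2) * (p i * g i) := by
      intro i
      have h1 : |ε/2 * g i| ≤ ε/2 := by
        rw [abs_mul, abs_of_nonneg (by linarith : 0 ≤ ε/2)]
        exact mul_le_of_le_one_right (by linarith) (hg i)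
      have h2 := Real.abs_exp_sub_one_sub_id_le (h1.trans (by linarith))
      have h3 := (abs_le.mp h2).2
      have h4 : (ε/2 * g i)^2 ≤ (ε/2)^2 := by
        rw [← sq_abs (ε/2 * g i)]; exact pow_le_pow_left₀ (abs_nonneg _) h1 2
      have := mul_le_mul_of_nonneg_left
        (by linarith : Real.exp (ε/2 * g i) ≤ 1 + (ε/2)^2 + ε/2 * g i) (hp i)
      linarith
    calc _ ≤ ∑ i, (p i * (1 + (ε/2)^2) + (ε/2) * (p i * g i)) := Finset.sum_le_sum fun i _ => this i
      _ = 1 + (ε/2)^2 := by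
        rw [Finset.sum_add_distrib, ← Finset.sum_mul, ← Finset.mul_sum, hp1, hg0]; ring
      _ ≤ _ := by linarith [Real.add_one_le_exp ((ε/2)^2)]
  calc _ ≤ ∑ f : Fin n → ι, (∏ m, p (f m)) * Real.exp (ε/2 * (∑ m, g (f m)) - ε/2 * (ε * n)) := by
        apply Finset.sum_le_sum; intro f _
        apply mul_le_mul_of_nonneg_left _ (Finset.prod_nonneg fun m _ => hp _)
        split_ifs with h
        · apply Real.one_le_exp
          have := mul_le_mul_of_nonneg_left h (by linarith : 0 ≤ ε/2)
          linarith
        · exact (Real.exp_pos _).le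
    _ = (∑ i, p i * Real.exp (ε/2 * g i)) ^ n * Real.exp (-(ε/2*ε))^n := by
        rw [Finset.sum_pow', Fintype.piFinset_univ, Finset.sum_mul]
        apply Finset.sum_congr rfl; intro f _
        rw [Finset.prod_mul_distrib, ← Real.exp_sum, mul_assoc, ← Real.exp_nat_mul, ← Real.exp_add,
          ← Finset.mul_sum]
        congr 2; ring
    _ ≤ Real.exp ((ε/2)^2) ^ n * Real.exp (-(ε/2*ε))^n := by
        gcongr
        exact Finset.sum_nonneg fun i _ => mul_nonneg (hp i) (Real.exp_pos _).le
    _ = _ := by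
        rw [← mul_pow, ← Real.exp_add]; congr 2; ring

lemma stay_unif (r : ℝ) (hr : 0 < r) (δ : ℝ) (hδ : 0 < δ) :
    ∃ η > 0, ∃ M : ℕ, ∀ n m : ℕ, M ≤ n → |(m:ℝ) - n * r| < η * n →
      |Real.sqrt n * stayP m 0 - Real.sqrt (2 / Real.pi / r)| < δ := by
  set F : Filter (ℕ × ℕ) := comap Prod.fst atTop ⊓ comap (fun q : ℕ × ℕ => (q.2:ℝ)/q.1) (nhds r)
    with hF
  have hn : Tendsto (fun q : ℕ × ℕ => q.1) F atTop := tendsto_comap.mono_left inf_le_left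
  have hq : Tendsto (fun q : ℕ × ℕ => (q.2:ℝ)/q.1) F (nhds r) := tendsto_comap.mono_left inf_le_right
  have hnR : Tendsto (fun q : ℕ × ℕ => (q.1:ℝ)) F atTop := tendsto_natCast_atTop_atTop.comp hn
  have hm : Tendsto (fun q : ℕ × ℕ => q.2) F atTop := by
    rw [← tendsto_natCast_atTop_iff (R := ℝ)]
    refine (hq.pos_mul_atTop hr hnR).congr' ?_
    filter_upwards [hnR.eventually_gt_atTop 0] with q h
    field_simp
  have h1 := (stayP_tendsto.comp hm).div hq.sqrt (by positivity)
  rw [← Real.sqrt_div (by positivity)] at h1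
  have h2 : Tendsto (fun q : ℕ × ℕ => Real.sqrt q.1 * stayP q.2 0) F
      (nhds (Real.sqrt (2 / Real.pi / r))) := by
    refine h1.congr' ?_
    filter_upwards [hnR.eventually_gt_atTop 0, hm.eventually_gt_atTop 0] with q h h'
    simp only [Function.comp, Pi.div_apply]
    rw [Real.sqrt_div (by positivity)]
    have : Real.sqrt q.1 ≠ 0 := by positivity
    have : Real.sqrt q.2 ≠ 0 := by positivity
    field_simp
  have h3 := Metric.tendsto_nhds.mp h2 δ hδ
  have hb := (atTop_basis.comap (Prod.fst : ℕ × ℕ → ℕ)).inf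
    ((Metric.nhds_basis_ball (x := r)).comap (fun q : ℕ × ℕ => (q.2:ℝ)/q.1))
  obtain ⟨⟨M, η⟩, ⟨-, hη⟩, hs⟩ := hb.eventually_iff.mp h3
  refine ⟨η, hη, M + 1, fun n m hM hh => ?_⟩
  have hn0 : (0:ℝ) < n := by exact_mod_cast (by omega : 0 < n)
  have := @hs (n, m) ⟨by simp; omega, by
    simp only [Set.mem_preimage, Metric.mem_ball, Real.dist_eq]
    rw [show (m:ℝ)/n - r = (m - n*r)/n by field_simp, abs_div, abs_of_pos hn0, div_lt_iff₀ hn0]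
    exact hh⟩
  simpa [Real.dist_eq] using this

lemma key_bound {ι κ : Type*} [Fintype ι] [Fintype κ] (p : ι → ℝ) (hp : ∀ i, 0 ≤ p i)
    (hp1 : ∑ i, p i = 1) (x : ι → κ → ℤ) (r : κ → ℝ) (hr : ∀ k, 0 < r k)
    (hrx : ∀ k, ∑ i, p i * (if x i k ≠ 0 then 1 else 0) = r k)
    (A : ∀ n, (Fin n → ι) → ℝ) (hA0 : ∀ n f, 0 ≤ A n f) (hA1 : ∀ n f, A n f ≤ 1)
    (δ : ℝ) (hδ : 0 < δ) :
    ∃ ρ C : ℝ, 0 ≤ ρ ∧ ρ < 1 ∧ ∀ᶠ n : ℕ in atTop,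
      |∑ f : Fin n → ι, (∏ m, p (f m)) *
          (A n f * ∏ k, (Real.sqrt n * stayP (cnt n (fun m => x (f m) k)) 0))
        - (∏ k, Real.sqrt (2 / Real.pi / r k)) * ∑ f : Fin n → ι, (∏ m, p (f m)) * A n f|
      ≤ δ * (∑ f : Fin n → ι, (∏ m, p (f m)) * A n f)
        + C * (Real.sqrt n ^ (Fintype.card κ) * ρ ^ n) := by
  set Lk : κ → ℝ := fun k => Real.sqrt (2 / Real.pi / r k) with hL
  have hr1 : ∀ k, r k ≤ 1 := by
    intro k; rw [← hrx k]
    refine le_trans (Finset.sum_le_sum fun i _ => ?_) hp1.le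
    split_ifs <;> simp [hp i]
  -- continuity of the product
  have hcont : Continuous (fun v : κ → ℝ => ∏ k, v k) := by fun_prop
  obtain ⟨δ', hδ', hprod⟩ := Metric.continuousAt_iff.mp (hcont.continuousAt (x := Lk)) δ hδ
  choose η hη M hM using fun k => stay_unif (r k) (hr k) δ' hδ'
  obtain ⟨ε, he, he2, hεη⟩ : ∃ ε : ℝ, 0 < ε ∧ ε ≤ 2 ∧ ∀ k, ε ≤ η k := by
    by_cases hk : Nonempty κ
    · refine ⟨min 2 (Finset.univ.inf' Finset.univ_nonempty η), ?_, min_le_left _ _, fun k => ?_⟩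
      · apply lt_min (by norm_num)
        rw [Finset.lt_inf'_iff]; intro k _; exact hη k
      · exact (min_le_right _ _).trans (Finset.inf'_le _ (Finset.mem_univ k))
    · exact ⟨1, by norm_num, by norm_num, fun k => (hk ⟨k⟩).elim⟩
  set g : κ → ι → ℝ := fun k i => (if x i k ≠ 0 then 1 else 0) - r k with hg
  have hg1 : ∀ k i, |g k i| ≤ 1 := by
    intro k i; have := hr k; have := hr1 k
    simp only [hg]; rw [abs_le]; split_ifs <;> constructor <;> linarith
  have hg0 : ∀ k, ∑ i, p i * g k i = 0 := by
    intro k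
    simp only [hg, mul_sub, Finset.sum_sub_distrib]
    rw [hrx, ← Finset.sum_mul, hp1]; ring
  have hsum : ∀ (n : ℕ) (f : Fin n → ι) k,
      ∑ m, g k (f m) = (cnt n (fun m => x (f m) k) : ℝ) - n * r k := by
    intro n f k
    simp only [hg, Finset.sum_sub_distrib, cnt]
    push_cast; simp
  set ρ := Real.exp (-(ε^2/4)) with hρ
  have hup := fun n k => chernoff p hp hp1 (g k) (hg1 k) (hg0 k) ε he.le he2 n
  have hdn := fun n k => chernoff p hp hp1 (fun i => - g k i)
    (fun i => by rw [abs_neg]; exact hg1 k i)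
    (by simp only [mul_neg, Finset.sum_neg_distrib, hg0 k, neg_zero]) ε he.le he2 n
  refine ⟨ρ, (1 + ∏ k, Lk k) * (2 * Fintype.card κ), (Real.exp_pos _).le, ?_, ?_⟩
  · rw [hρ, Real.exp_lt_one_iff]; have : 0 < ε^2 := by positivity
    linarith
  filter_upwards [eventually_ge_atTop (∑ k, M k), eventually_ge_atTop 1] with n hn hn1
  have hLpos : 0 ≤ ∏ k, Lk k := Finset.prod_nonneg fun k _ => Real.sqrt_nonneg _
  have hsq1 : 1 ≤ Real.sqrt n := by
    rw [Real.one_le_sqrt]; exact_mod_cast hn1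
  have hpw1 : 1 ≤ Real.sqrt n ^ Fintype.card κ := one_le_pow₀ hsq1
  -- pointwise bound
  have hpt : ∀ f : Fin n → ι,
      |A n f * (∏ k, (Real.sqrt n * stayP (cnt n (fun m => x (f m) k)) 0)) - (∏ k, Lk k) * A n f| ≤
      δ * A n f + (1 + ∏ k, Lk k) * Real.sqrt n ^ Fintype.card κ *
        ∑ k, ((if ε * n ≤ ∑ m, g k (f m) then 1 else 0) +
          (if ε * n ≤ ∑ m, -g k (f m) then 1 else 0)) := by
    intro f
    have hs0 : ∀ k, (0:ℝ) ≤ ((if ε * n ≤ ∑ m, g k (f m) then 1 else 0) +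
          (if ε * n ≤ ∑ m, -g k (f m) then 1 else 0)) := by
      intro k; split_ifs <;> norm_num
    rw [show ∀ a b c : ℝ, a * b - c * a = a * (b - c) by intros; ring, abs_mul,
      abs_of_nonneg (hA0 n f)]
    by_cases hgood : ∀ k, |∑ m, g k (f m)| < ε * n
    · have h1 : dist (fun k => Real.sqrt n * stayP (cnt n (fun m => x (f m) k)) 0) Lk < δ' := by
        rw [dist_pi_lt_iff hδ']
        intro k
        rw [Real.dist_eq]
        apply hM k
        · exact (Finset.single_le_sum (fun _ _ => Nat.zero_le _) (Finset.mem_univ k)).trans hn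
        · rw [← hsum]
          exact (hgood k).trans_le (mul_le_mul_of_nonneg_right (hεη k) (by positivity))
      have h2 := hprod h1
      rw [Real.dist_eq] at h2
      have h3 := mul_le_mul_of_nonneg_left h2.le (hA0 n f)
      have h4 : 0 ≤ (1 + ∏ k, Lk k) * Real.sqrt n ^ Fintype.card κ *
        ∑ k, ((if ε * n ≤ ∑ m, g k (f m) then (1:ℝ) else 0) +
          (if ε * n ≤ ∑ m, -g k (f m) then 1 else 0)) :=
        mul_nonneg (by positivity) (Finset.sum_nonneg fun k _ => hs0 k)
      linarith
    · push Not at hgood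
      obtain ⟨k, hk⟩ := hgood
      have h1 : (1:ℝ) ≤ ∑ k, ((if ε * n ≤ ∑ m, g k (f m) then 1 else 0) +
          (if ε * n ≤ ∑ m, -g k (f m) then 1 else 0)) := by
        refine le_trans ?_ (Finset.single_le_sum (fun k _ => hs0 k) (Finset.mem_univ k))
        rcases le_abs.mp hk with h | h
        · rw [if_pos h]; split_ifs <;> norm_num
        · rw [← Finset.sum_neg_distrib] at h
          rw [if_pos h]; split_ifs <;> norm_num
      have h2 : 0 ≤ ∏ k, (Real.sqrt n * stayP (cnt n (fun m => x (f m) k)) 0) :=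
        Finset.prod_nonneg fun k _ => mul_nonneg (Real.sqrt_nonneg _) (stayP_nonneg _ _)
      have h3 : ∏ k, (Real.sqrt n * stayP (cnt n (fun m => x (f m) k)) 0)
          ≤ Real.sqrt n ^ Fintype.card κ := by
        rw [← Finset.card_univ, ← Finset.prod_const]
        apply Finset.prod_le_prod
        · intro k _; exact mul_nonneg (Real.sqrt_nonneg _) (stayP_nonneg _ _)
        · intro k _; exact mul_le_of_le_one_right (Real.sqrt_nonneg _) (stayP_le_one _ _)
      have h4 : |∏ k, (Real.sqrt n * stayP (cnt n (fun m => x (f m) k)) 0) - ∏ k, Lk k|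
          ≤ (1 + ∏ k, Lk k) * Real.sqrt n ^ Fintype.card κ := by
        rw [abs_le]; constructor <;> nlinarith
      calc _ ≤ 1 * ((1 + ∏ k, Lk k) * Real.sqrt n ^ Fintype.card κ) :=
            mul_le_mul (hA1 n f) h4 (abs_nonneg _) zero_le_one
        _ ≤ (1 + ∏ k, Lk k) * Real.sqrt n ^ Fintype.card κ * _ := by
            rw [one_mul]
            exact le_mul_of_one_le_right (by positivity) h1
        _ ≤ _ := by
            have := mul_nonneg hδ.le (hA0 n f)
            linarith
  have hP0 : ∀ f : Fin n → ι, 0 ≤ ∏ m, p (f m) := fun f => Finset.prod_nonneg fun m _ => hp _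
  rw [Finset.mul_sum, ← Finset.sum_sub_distrib]
  calc _ ≤ ∑ f : Fin n → ι, (∏ m, p (f m)) * (δ * A n f +
        (1 + ∏ k, Lk k) * Real.sqrt n ^ Fintype.card κ *
        ∑ k, ((if ε * n ≤ ∑ m, g k (f m) then 1 else 0) +
          (if ε * n ≤ ∑ m, -g k (f m) then 1 else 0))) := by
        refine (Finset.abs_sum_le_sum_abs _ _).trans (Finset.sum_le_sum fun f _ => ?_)
        refine le_trans (le_of_eq ?_) (mul_le_mul_of_nonneg_left (hpt f) (hP0 f))
        rw [← abs_of_nonneg (hP0 f), ← abs_mul, abs_of_nonneg (hP0 f)]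
        congr 1; ring
    _ = δ * (∑ f : Fin n → ι, (∏ m, p (f m)) * A n f) +
        (1 + ∏ k, Lk k) * Real.sqrt n ^ Fintype.card κ * ∑ k,
          ((∑ f : Fin n → ι, (∏ m, p (f m)) * (if ε * n ≤ ∑ m, g k (f m) then 1 else 0)) +
          (∑ f : Fin n → ι, (∏ m, p (f m)) * (if ε * n ≤ ∑ m, -g k (f m) then 1 else 0))) := by
        simp only [← Finset.sum_add_distrib]
        rw [Finset.sum_comm, Finset.mul_sum, Finset.mul_sum, ← Finset.sum_add_distrib]
        apply Finset.sum_congr rfl; intro f _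
        simp only [← mul_add]
        rw [← Finset.mul_sum]; ring
    _ ≤ δ * (∑ f : Fin n → ι, (∏ m, p (f m)) * A n f) +
        (1 + ∏ k, Lk k) * Real.sqrt n ^ Fintype.card κ * ∑ k : κ, (ρ^n + ρ^n) := by
        gcongr with k
        · exact hup n k
        · exact hdn n k
    _ = _ := by
        simp; ring

lemma key_tendsto {ι κ : Type*} [Fintype ι] [Fintype κ] (p : ι → ℝ) (hp : ∀ i, 0 ≤ p i)
    (hp1 : ∑ i, p i = 1) (x : ι → κ → ℤ) (r : κ → ℝ) (hr : ∀ k, 0 < r k)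
    (hrx : ∀ k, ∑ i, p i * (if x i k ≠ 0 then 1 else 0) = r k)
    (A : ∀ n, (Fin n → ι) → ℝ) (hA0 : ∀ n f, 0 ≤ A n f) (hA1 : ∀ n f, A n f ≤ 1)
    (j : ℕ) (a : ℝ)
    (ha : Tendsto (fun n : ℕ => Real.sqrt n ^ j * ∑ f : Fin n → ι, (∏ m, p (f m)) * A n f)
      atTop (nhds a)) :
    Tendsto (fun n : ℕ => Real.sqrt n ^ j * ∑ f : Fin n → ι, (∏ m, p (f m)) *
          (A n f * ∏ k, (Real.sqrt n * stayP (cnt n (fun m => x (f m) k)) 0)))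
      atTop (nhds ((∏ k, Real.sqrt (2 / Real.pi / r k)) * a)) := by
  have hmain := ha.const_mul (∏ k, Real.sqrt (2 / Real.pi / r k))
  refine hmain.congr_dist ?_
  rw [Metric.tendsto_nhds]
  intro ε he
  obtain ⟨ρ, C, h0, h1, hb⟩ := key_bound p hp hp1 x r hr hrx A hA0 hA1 (ε / (2 * (|a| + 1)))
    (by positivity)
  have hz : Tendsto (fun n : ℕ => C * ((n:ℝ) ^ (j + Fintype.card κ) * ρ ^ n)) atTop (nhds 0) := by
    simpa using (tendsto_pow_const_mul_const_pow_of_abs_lt_one (j + Fintype.card κ)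
      (by rwa [abs_of_nonneg h0] : |ρ| < 1)).const_mul C
  have hz2 : Tendsto (fun n : ℕ => |C| * ((n:ℝ) ^ (j + Fintype.card κ) * ρ ^ n)) atTop (nhds 0) := by
    simpa using (tendsto_pow_const_mul_const_pow_of_abs_lt_one (j + Fintype.card κ)
      (by rwa [abs_of_nonneg h0] : |ρ| < 1)).const_mul |C|
  filter_upwards [hb, hz2.eventually_lt_const (by positivity : (0:ℝ) < ε/2),
    ha.eventually_lt_const (by linarith [le_abs_self a] : a < |a| + 1),
    eventually_ge_atTop 1] with n hbn hzn han hn1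
  rw [Real.dist_0_eq_abs, abs_of_nonneg dist_nonneg, dist_comm, Real.dist_eq]
  set X := ∑ f : Fin n → ι, (∏ m, p (f m)) * A n f with hX
  set Y := ∑ f : Fin n → ι, (∏ m, p (f m)) *
          (A n f * ∏ k, (Real.sqrt n * stayP (cnt n (fun m => x (f m) k)) 0)) with hY
  have hsn : 0 ≤ Real.sqrt n ^ j := by positivity
  rw [show Real.sqrt n ^ j * Y - (∏ k, Real.sqrt (2 / Real.pi / r k)) * (Real.sqrt n ^ j * X)
    = Real.sqrt n ^ j * (Y - (∏ k, Real.sqrt (2 / Real.pi / r k)) * X) by ring, abs_mul,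
    abs_of_nonneg hsn]
  have hn1' : (1:ℝ) ≤ n := by exact_mod_cast hn1
  have hsq : Real.sqrt n ≤ n := by
    rw [Real.sqrt_le_left (by positivity)]; nlinarith
  calc _ ≤ Real.sqrt n ^ j * (ε / (2 * (|a| + 1)) * X
        + C * (Real.sqrt n ^ (Fintype.card κ) * ρ ^ n)) := mul_le_mul_of_nonneg_left hbn hsn
    _ = ε / (2 * (|a| + 1)) * (Real.sqrt n ^ j * X) +
        C * (Real.sqrt n ^ (j + Fintype.card κ) * ρ ^ n) := by rw [pow_add]; ring
    _ ≤ ε / (2 * (|a| + 1)) * (|a| + 1) + |C| * ((n:ℝ) ^ (j + Fintype.card κ) * ρ ^ n) := by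
        gcongr
        exact le_abs_self C
    _ = ε / 2 + |C| * ((n:ℝ) ^ (j + Fintype.card κ) * ρ ^ n) := by
        have : |a| + 1 ≠ 0 := by positivity
        field_simp
    _ < ε := by linarith

lemma nnW_prod {κ : Type*} [Fintype κ] (n : ℕ) (c : Fin n → κ → ℤ) :
    ∏ k, nnW n 0 (fun m => c m k) =
    if ∀ m : ℕ, m ≤ n → ∀ j : κ,
        0 ≤ ∑ k ∈ Finset.univ.filter (fun k : Fin n => (k : ℕ) < m), c k j then 1 else 0 := by
  split_ifs with h
  · apply Finset.prod_eq_one; intro k _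
    unfold nnW; rw [if_pos]; intro m hm; rw [zero_add]; exact h m hm k
  · push Not at h
    obtain ⟨m, hm, j, hj⟩ := h
    apply Finset.prod_eq_zero (Finset.mem_univ j)
    unfold nnW; rw [if_neg]; intro h; have := h m hm; rw [zero_add] at this; exact absurd this (not_le.mpr hj)

lemma avg_axes {ι κ : Type*} [Fintype ι] [Fintype κ] (p : ι → ℝ) (x : ι → κ → ℤ) (y : ι → ℤ)
    (σ : κ → (ι ≃ ι)) (hσp : ∀ k i, p (σ k i) = p i) (hσy : ∀ k i, y (σ k i) = y i)
    (hσx : ∀ k i, x (σ k i) k = - x i k) (hσx' : ∀ k k' i, k' ≠ k → x (σ k i) k' = x i k')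
    (H : ℤ → ℝ) (φ : κ → ℤ → ℝ) : ∑ i, p i * (H (y i) * ∏ k, φ k (x i k)) =
      ∑ i, p i * (H (y i) * ∏ k, (φ k (x i k) + φ k (-x i k)) / 2) := by
  have key : ∀ K : Finset κ, ∑ i, p i * (H (y i) * ∏ k, φ k (x i k)) =
      ∑ i, p i * (H (y i) * ∏ k, if k ∈ K then (φ k (x i k) + φ k (-x i k)) / 2
        else φ k (x i k)) := by
    intro K
    induction K using Finset.induction_on with
    | empty => simp
    | insert k0 K hk ih =>
      rw [ih]
      set R : ι → ℝ := fun i => p i * H (y i) * ∏ k ∈ Finset.univ.erase k0,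
        (if k ∈ K then (φ k (x i k) + φ k (-x i k)) / 2 else φ k (x i k)) with hR
      have hRσ : ∀ i, R (σ k0 i) = R i := by
        intro i
        simp only [hR, hσp, hσy]
        congr 1
        apply Finset.prod_congr rfl; intro k hk
        rw [hσx' k0 k i (Finset.ne_of_mem_erase hk)]
      have h1 : ∀ i, p i * (H (y i) * ∏ k, if k ∈ K then (φ k (x i k) + φ k (-x i k)) / 2
        else φ k (x i k)) = R i * φ k0 (x i k0) := by
        intro i
        rw [← Finset.mul_prod_erase Finset.univ _ (Finset.mem_univ k0), if_neg hk]
        simp only [hR]; ring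
      have h2 : ∀ i, p i * (H (y i) * ∏ k, if k ∈ insert k0 K then
          (φ k (x i k) + φ k (-x i k)) / 2 else φ k (x i k)) =
          (R i * φ k0 (x i k0) + R i * φ k0 (-x i k0)) / 2 := by
        intro i
        rw [← Finset.mul_prod_erase Finset.univ _ (Finset.mem_univ k0),
          if_pos (Finset.mem_insert_self _ _)]
        have : ∏ k ∈ Finset.univ.erase k0, (if k ∈ insert k0 K then
          (φ k (x i k) + φ k (-x i k)) / 2 else φ k (x i k)) = ∏ k ∈ Finset.univ.erase k0,
          (if k ∈ K then (φ k (x i k) + φ k (-x i k)) / 2 else φ k (x i k)) := by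
          apply Finset.prod_congr rfl; intro k hk
          have := Finset.ne_of_mem_erase hk
          simp [this]
        rw [this]
        simp only [hR]; ring
      simp only [h1, h2]
      rw [← Finset.sum_div, Finset.sum_add_distrib]
      have h3 : ∑ i, R i * φ k0 (-x i k0) = ∑ i, R i * φ k0 (x i k0) := by
        rw [← (σ k0).sum_comp (fun i => R i * φ k0 (x i k0))]
        apply Finset.sum_congr rfl; intro i _
        rw [hRσ, hσx]
      rw [h3]; ring
  simpa using key Finset.univ

lemma avg_last {ι : Type*} [Fintype ι] (p : ι → ℝ) (y : ι → ℤ)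
    (hy : ∀ i, y i = -1 ∨ y i = 0 ∨ y i = 1)
    (hbal : ∑ i, p i * (if y i = -1 then 1 else 0) = ∑ i, p i * (if y i = 1 then 1 else 0))
    (H : ℤ → ℝ) (φ : Unit → ℤ → ℝ) : ∑ i, p i * (H 0 * ∏ k, φ k (y i)) =
      ∑ i, p i * (H 0 * ∏ k, (φ k (y i) + φ k (-y i)) / 2) := by
  simp only [Finset.univ_unique, Finset.prod_singleton]
  rw [← sub_eq_zero, ← Finset.sum_sub_distrib]
  have : ∀ i, p i * (H 0 * φ default (y i)) - p i * (H 0 * ((φ default (y i) + φ default (-y i)) / 2))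
      = H 0 * ((φ default 1 - φ default (-1)) / 2) *
        (p i * (if y i = 1 then 1 else 0) - p i * (if y i = -1 then 1 else 0)) := by
    intro i
    rcases hy i with h | h | h <;> simp [h] <;> ring
  simp only [this]
  rw [← Finset.mul_sum, Finset.sum_sub_distrib, hbal]; simp

/-- Zero drift asymptotics for a mostly symmetric step set in dimension `d+1`
(symmetric over the first `d` axes), with zero drift `A(1) = B(1)`:
`s_n ∼ S(1)^n n^{-(d+1)/2} S(1)^{(d+1)/2} / (π^{(d+1)/2} (b_1⋯b_{d+1})^{1/2})`. -/
theorem mostly_symmetric_zero_drift_asymptotics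
    (d : ℕ) (S : Finset (Fin (d + 1) → ℤ)) (w : (Fin (d + 1) → ℤ) → ℝ)
    (hstep : ∀ i ∈ S, (∀ j, i j = -1 ∨ i j = 0 ∨ i j = 1) ∧ i ≠ 0)
    (hw : ∀ i ∈ S, 0 < w i)
    (hsym : ∀ k : Fin d, SymmetricAxis (d + 1) S w (Fin.castSucc k))
    (hfwd : ∀ k : Fin (d + 1), ∃ i ∈ S, i k = 1)
    (hbwd : ∀ k : Fin (d + 1), ∃ i ∈ S, i k = -1)
    (hdrift : (∑ i ∈ S.filter fun i => i (Fin.last d) = -1, w i)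
        = ∑ i ∈ S.filter fun i => i (Fin.last d) = 1, w i) :
    Tendsto (fun n : ℕ =>
      walkWeight (d + 1) S w n /
        ((∑ i ∈ S, w i) ^ n * (n : ℝ) ^ (-((d : ℝ) + 1) / 2) *
          ((∑ i ∈ S, w i) ^ (((d : ℝ) + 1) / 2) /
            (Real.pi ^ (((d : ℝ) + 1) / 2) *
              Real.sqrt (∏ k : Fin (d + 1), ∑ i ∈ S.filter fun i => i k = 1, w i)))))
      atTop (nhds 1) := by
  set T := ∑ i ∈ S, w i with hT
  have hTpos : 0 < T := by
    obtain ⟨i, hi, -⟩ := hfwd 0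
    exact Finset.sum_pos hw ⟨i, hi⟩
  set b : Fin (d+1) → ℝ := fun k => ∑ i ∈ S.filter fun i => i k = 1, w i with hb
  have hbpos : ∀ k, 0 < b k := by
    intro k
    obtain ⟨i, hi, hik⟩ := hfwd k
    exact Finset.sum_pos (fun i hi => hw i (Finset.mem_filter.mp hi).1)
      ⟨i, Finset.mem_filter.mpr ⟨hi, hik⟩⟩
  let p : {i // i ∈ S} → ℝ := fun i => w i / T
  have hp : ∀ i, 0 ≤ p i := fun i => (div_pos (hw i i.2) hTpos).le
  have hp1 : ∑ i, p i = 1 := by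
    simp only [p]
    rw [← Finset.sum_div, Finset.sum_coe_sort S w, ← hT, div_self hTpos.ne']
  let y : {i // i ∈ S} → ℤ := fun i => i.1 (Fin.last d)
  let x : {i // i ∈ S} → Fin d → ℤ := fun i k => i.1 k.castSucc
  have hx3 : ∀ (i : {i // i ∈ S}) (k : Fin (d+1)), i.1 k = -1 ∨ i.1 k = 0 ∨ i.1 k = 1 :=
    fun i k => (hstep i i.2).1 k
  -- sums over the filter as sums over the subtype
  have hconv : ∀ (k : Fin (d+1)) (z : ℤ), ∑ i : {i // i ∈ S}, p i * (if i.1 k = z then 1 else 0)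
      = (∑ i ∈ S.filter fun i => i k = z, w i) / T := by
    intro k z
    rw [Finset.sum_filter, Finset.sum_div, ← Finset.sum_coe_sort S]
    apply Finset.sum_congr rfl; intro i _
    simp only [p]; split_ifs <;> simp
  let σ : Fin d → ({i // i ∈ S} ≃ {i // i ∈ S}) := fun k => Function.Involutive.toPerm
    (fun i => ⟨Function.update i.1 k.castSucc (-(i.1 k.castSucc)), (hsym k i.1 i.2).1⟩)
    (by intro i; apply Subtype.ext; simp)
  have hσ1 : ∀ k i, ((σ k i : {i // i ∈ S}) : Fin (d+1) → ℤ) =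
      Function.update i.1 k.castSucc (-(i.1 k.castSucc)) := fun k i => rfl
  have hσp : ∀ k i, p (σ k i) = p i := by
    intro k i
    simp only [p]; rw [hσ1, (hsym k i.1 i.2).2]
  have hσx : ∀ k i, x (σ k i) k = - x i k := by
    intro k i; simp only [x]; rw [hσ1]; simp
  have hσx' : ∀ k k' i, k' ≠ k → x (σ k i) k' = x i k' := by
    intro k k' i h; simp only [x]; rw [hσ1, Function.update_of_ne]; simpa using h
  have hσy : ∀ k i, y (σ k i) = y i := by
    intro k i; simp only [y]; rw [hσ1, Function.update_of_ne]; exact (Fin.castSucc_lt_last k).ne'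
  have hbal : ∀ k : Fin (d+1), ∑ i : {i // i ∈ S}, p i * (if i.1 k = -1 then 1 else 0)
      = ∑ i : {i // i ∈ S}, p i * (if i.1 k = 1 then 1 else 0) := by
    intro k
    refine Fin.lastCases ?_ (fun k => ?_) k
    · rw [hconv, hconv, hdrift]
    · rw [← (σ k).sum_comp]
      apply Finset.sum_congr rfl; intro i _
      have h1 := hσx k i
      simp only [x] at h1
      rw [hσp, h1]
      congr 1
      exact if_congr (by omega) rfl rfl
  have hr : ∀ k : Fin (d+1), ∑ i : {i // i ∈ S}, p i * (if i.1 k ≠ 0 then 1 else 0)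
      = 2 * b k / T := by
    intro k
    have h1 : ∑ i : {i // i ∈ S}, p i * (if i.1 k ≠ 0 then 1 else 0) =
        ∑ i : {i // i ∈ S}, p i * (if i.1 k = -1 then 1 else 0) +
        ∑ i : {i // i ∈ S}, p i * (if i.1 k = 1 then 1 else 0) := by
      rw [← Finset.sum_add_distrib]
      apply Finset.sum_congr rfl; intro i _
      rcases hx3 i k with h | h | h <;> simp [h]
    rw [h1, hbal, hconv]; simp only [hb]; ring
  have hrpos : ∀ k, 0 < 2 * b k / T := fun k => div_pos (by linarith [hbpos k]) hTpos
  -- the walk weight as an expectation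
  have hwalk : ∀ n, walkWeight (d+1) S w n = T^n * ∑ f : Fin n → {i // i ∈ S}, (∏ m, p (f m)) *
      (nnW n 0 (fun m => y (f m)) * ∏ k, stayP (cnt n (fun m => x (f m) k)) 0) := by
    intro n
    rw [← symmetrize p x y (fun i k => hx3 i _) (avg_axes p x y σ hσp hσy hσx hσx') n 0 (fun _ => 0)]
    unfold walkWeight
    rw [Finset.mul_sum]
    apply Finset.sum_congr rfl; intro f _
    have h1 : ∏ m, w (f m) = T^n * ∏ m, p (f m) := by
      simp only [p]
      rw [Finset.prod_div_distrib]; simp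
      field_simp
    have h2 := nnW_prod n (fun (m : Fin n) (k : Fin (d+1)) => (f m).1 k)
    rw [Fin.prod_univ_castSucc] at h2
    rw [h1, ← mul_assoc, mul_comm (nnW n 0 (fun m => y (f m))), h2]
    rw [mul_ite, mul_one, mul_zero]
    congr 1
  -- last coordinate
  have hlast : Tendsto (fun n : ℕ => Real.sqrt n ^ 1 * ∑ f : Fin n → {i // i ∈ S},
      (∏ m, p (f m)) * nnW n 0 (fun m => y (f m))) atTop
      (nhds (Real.sqrt (2 / Real.pi / (2 * b (Fin.last d) / T)))) := by
    have h1 := key_tendsto (κ := Unit) p hp hp1 (fun i _ => y i) (fun _ => 2 * b (Fin.last d) / T)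
      (fun _ => hrpos _) (fun _ => hr _) (fun _ _ => 1) (fun _ _ => zero_le_one) (fun _ _ => le_rfl)
      0 1 (by
        have : ∀ n : ℕ, ∑ f : Fin n → {i // i ∈ S}, (∏ m, p (f m)) = 1 := by
          intro n
          have := Finset.sum_pow' Finset.univ p n
          rw [hp1, one_pow, Fintype.piFinset_univ] at this
          exact this.symm
        simp [this])
    simp only [Finset.univ_unique, Finset.prod_singleton, mul_one, pow_zero, one_mul] at h1
    refine h1.congr fun n => ?_
    have h2 := symmetrize (κ := Unit) p (fun i _ => y i) (fun _ => 0) (fun i _ => hx3 i _)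
      (avg_last p y (fun i => hx3 i _) (hbal _)) n 0 (fun _ => 0)
    have h3 : nnW n 0 (fun _ => 0) = 1 := by simp [nnW]
    simp only [h3, Finset.univ_unique, Finset.prod_singleton, one_mul] at h2
    rw [h2, pow_one, Finset.mul_sum]
    apply Finset.sum_congr rfl; intro f _; ring
  have hfin := key_tendsto p hp hp1 x (fun k => 2 * b k.castSucc / T) (fun _ => hrpos _)
    (fun _ => hr _) (fun n f => nnW n 0 (fun m => y (f m))) (fun _ _ => nnW_nonneg _ _ _)
    (fun _ _ => nnW_le_one _ _ _) 1 _ hlast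
  rw [← Fin.prod_univ_castSucc (fun k => Real.sqrt (2 / Real.pi / (2 * b k / T)))] at hfin
  have hrp : ∀ z : ℝ, 0 ≤ z → z ^ (((d:ℝ)+1)/2) = Real.sqrt z ^ (d+1) := by
    intro z hz
    rw [Real.sqrt_eq_rpow, ← Real.rpow_natCast, ← Real.rpow_mul hz]
    congr 1; push_cast; ring
  have hconst : ∏ k, Real.sqrt (2 / Real.pi / (2 * b k / T)) =
      T ^ (((d : ℝ) + 1) / 2) / (Real.pi ^ (((d : ℝ) + 1) / 2) * Real.sqrt (∏ k, b k)) := by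
    rw [hrp T hTpos.le, hrp _ Real.pi_pos.le, Real.sqrt_prod _ (fun k _ => (hbpos k).le)]
    have : ∀ k, Real.sqrt (2 / Real.pi / (2 * b k / T)) =
        Real.sqrt T / (Real.sqrt Real.pi * Real.sqrt (b k)) := by
      intro k
      have := hbpos k
      rw [← Real.sqrt_mul Real.pi_pos.le, ← Real.sqrt_div hTpos.le]
      congr 1; field_simp
    simp only [this, Finset.prod_div_distrib, Finset.prod_mul_distrib]
    simp
  have hcpos : 0 < ∏ k, Real.sqrt (2 / Real.pi / (2 * b k / T)) :=
    Finset.prod_pos fun k _ => Real.sqrt_pos.mpr (by have := hrpos k; positivity)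
  have hdiv := hfin.div_const (∏ k, Real.sqrt (2 / Real.pi / (2 * b k / T)))
  rw [div_self hcpos.ne'] at hdiv
  refine hdiv.congr' ?_
  filter_upwards [eventually_gt_atTop 0] with n hn
  have hn' : (0:ℝ) < n := by exact_mod_cast hn
  rw [← hconst, hwalk, neg_div, Real.rpow_neg hn'.le, hrp _ hn'.le]
  simp only [Finset.prod_mul_distrib, Finset.prod_const, Finset.card_univ, Fintype.card_fin]
  have e : ∑ f : Fin n → {i // i ∈ S}, (∏ m, p (f m)) * (nnW n 0 (fun m => y (f m)) *
      (Real.sqrt n ^ d * ∏ k, stayP (cnt n (fun m => x (f m) k)) 0)) =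
      Real.sqrt n ^ d * ∑ f : Fin n → {i // i ∈ S}, (∏ m, p (f m)) *
      (nnW n 0 (fun m => y (f m)) * ∏ k, stayP (cnt n (fun m => x (f m) k)) 0) := by
    rw [Finset.mul_sum]; apply Finset.sum_congr rfl; intro f _; ring
  rw [e]
  have hs : Real.sqrt n ≠ 0 := by positivity
  have hTn : T^n ≠ 0 := by positivity
  have hc := hcpos.ne'
  generalize ∏ k, Real.sqrt (2 / Real.pi / (2 * b k / T)) = c at hc ⊢
  rw [pow_succ (Real.sqrt n) d]
  field_simp

end
end

section
/- For the unweighted two-dimensional step set S = {(0,1), (0,-1), (1,0), (-1,0)} (the four cardinal directions), the number s_n of walks of length n taking steps in S, starting at the origin, and remaining in ℕ^2 satisfies s_n ∼ (4/π) · 4^n / n as n → ∞. -/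
open Finset Filter
open scoped Classical Real

noncomputable section

/-- The number of walks of length `n` with steps in `S`, starting at the origin and
never leaving `ℕ^d` (all partial sums have nonnegative coordinates). -/
def numWalks (d : ℕ) (S : Finset (Fin d → ℤ)) (n : ℕ) : ℕ :=
  Finset.card (Finset.univ.filter fun f : Fin n → {i // i ∈ S} =>
    ∀ m : ℕ, m ≤ n → ∀ j : Fin d,
      0 ≤ ∑ k ∈ Finset.univ.filter (fun k : Fin n => (k : ℕ) < m), ((f k : Fin d → ℤ) j))

/-- one-dimensional free walks -/
def frW : ℕ → ℤ → ℕ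
  | 0, t => if t = 0 then 1 else 0
  | n + 1, t => frW n (t - 1) + frW n (t + 1)

lemma frW_neg (n : ℕ) : ∀ t, frW n (-t) = frW n t := by
  induction n with
  | zero => intro t; simp [frW]
  | succ n ih =>
    intro t
    simp only [frW]
    rw [show -t - 1 = -(t + 1) by ring, show -t + 1 = -(t - 1) by ring, ih, ih, add_comm]

lemma frW_zero_of_lt (n : ℕ) : ∀ t : ℤ, t < -n → frW n t = 0 := by
  induction n with
  | zero => intro t ht; simp [frW]; rintro rfl; simp at ht
  | succ n ih =>
    intro t ht
    push_cast at ht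
    simp only [frW]
    rw [ih _ (by omega), ih _ (by omega)]

lemma frW_choose (n : ℕ) : ∀ k : ℕ, frW n (2 * k - n) = n.choose k := by
  induction n with
  | zero => intro k; cases k <;> simp [frW]; omega
  | succ n ih =>
    intro k
    cases k with
    | zero =>
      simp only [frW]
      rw [frW_zero_of_lt n _ (by push_cast; omega)]
      have := ih 0
      simp at this
      simp [this]
    | succ k =>
      simp only [frW]
      rw [Nat.choose_succ_succ, ← ih k, ← ih (k + 1)]
      push_cast
      congr 2 <;> ring

lemma frW_odd (n : ℕ) : ∀ t : ℤ, (t + n) % 2 = 1 → frW n t = 0 := by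
  induction n with
  | zero => intro t ht; simp [frW]; rintro rfl; simp at ht
  | succ n ih =>
    intro t ht
    push_cast at ht
    simp only [frW]
    rw [ih _ (by omega), ih _ (by omega)]

/-- two-dimensional free walks -/
def frN (n : ℕ) (a b : ℤ) : ℕ := frW n (a + b) * frW n (a - b)

lemma frN_succ (n : ℕ) (a b : ℤ) : frN (n + 1) a b =
    frN n (a + 1) b + frN n (a - 1) b + frN n a (b + 1) + frN n a (b - 1) := by
  simp only [frN, frW]
  rw [show a + 1 + b = a + b + 1 by ring, show a + 1 - b = a - b + 1 by ring,
    show a - 1 + b = a + b - 1 by ring, show a - 1 - b = a - b - 1 by ring,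
    show a + (b + 1) = a + b + 1 by ring, show a - (b + 1) = a - b - 1 by ring,
    show a + (b - 1) = a + b - 1 by ring, show a - (b - 1) = a - b + 1 by ring]
  ring

def bxF (n : ℕ) (x y : ℤ) : ℕ := ∑ a ∈ Ico (-x) (x + 2), ∑ b ∈ Ico (-y) (y + 2), frN n a b

lemma bx_shift (g : ℤ → ℕ) (x : ℤ) (hx : 0 ≤ x) :
    ∑ a ∈ Ico (-x) (x + 2), g (a + 1) + ∑ a ∈ Ico (-x) (x + 2), g (a - 1)
      = ∑ a ∈ Ico (-(x + 1)) (x + 1 + 2), g a + ∑ a ∈ Ico (-(x - 1)) (x - 1 + 2), g a := by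
  have h1 := Finset.sum_Ico_add' g (-x) (x + 2) 1
  have h2 := Finset.sum_Ico_add' g (-x) (x + 2) (-1)
  have spl : ∀ a b c : ℤ, a ≤ b → b ≤ c →
      ∑ t ∈ Ico a c, g t = ∑ t ∈ Ico a b, g t + ∑ t ∈ Ico b c, g t := by
    intro a b c hab hbc
    rw [← Finset.sum_union (Ico_disjoint_Ico_consecutive a b c),
      Ico_union_Ico_eq_Ico hab hbc]
  simp only [← sub_eq_add_neg] at h2
  rw [h1, h2, spl (-x + 1) (x + 1) (x + 2 + 1) (by omega) (by omega),
    spl (-(x + 1)) (x + 1) (x + 1 + 2) (by omega) (by omega),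
    show -x - 1 = -(x + 1) by ring, show x + 2 - 1 = x + 1 by ring,
    show x + 2 + 1 = x + 1 + 2 by ring, show -(x - 1) = -x + 1 by ring,
    show x - 1 + 2 = x + 1 by ring]
  ring

lemma bxF_succ (n : ℕ) (x y : ℤ) (hx : 0 ≤ x) (hy : 0 ≤ y) : bxF (n + 1) x y =
    bxF n (x + 1) y + bxF n (x - 1) y + bxF n x (y + 1) + bxF n x (y - 1) := by
  have h1 := bx_shift (fun a => ∑ b ∈ Ico (-y) (y + 2), frN n a b) x hx
  have h2 : ∑ a ∈ Ico (-x) (x + 2), _ = ∑ a ∈ Ico (-x) (x + 2), _ :=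
    Finset.sum_congr rfl fun a _ => bx_shift (fun b => frN n a b) y hy
  simp only [sum_add_distrib] at h2
  simp only [bxF, frN_succ, sum_add_distrib]
  omega

lemma bxF_zero (x y : ℤ) (hx : 0 ≤ x) (hy : 0 ≤ y) : bxF 0 x y = 1 := by
  have : ∀ a b, frN 0 a b = if a = 0 then (if b = 0 then 1 else 0) else 0 := by
    intro a b
    simp only [frN, frW]
    split_ifs <;> first | rfl | omega
  simp only [bxF, this]
  rw [Finset.sum_eq_single 0]
  · simp; omega
  · intro b _ hb; simp [hb]
  · simp; omega

lemma bxF_out (n : ℕ) (x y : ℤ) (h : x = -1 ∨ y = -1) : bxF n x y = 0 := by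
  rcases h with rfl | rfl <;> simp [bxF]

abbrev stS : Finset (Fin 2 → ℤ) := {![0, 1], ![0, -1], ![1, 0], ![-1, 0]}

def okW (n : ℕ) (p : Fin 2 → ℤ) (f : Fin n → {i // i ∈ stS}) : Prop :=
  ∀ m : ℕ, m ≤ n → ∀ j : Fin 2,
      0 ≤ p j + ∑ k ∈ Finset.univ.filter (fun k : Fin n => (k : ℕ) < m), ((f k : Fin 2 → ℤ) j)

def cnW (n : ℕ) (p : Fin 2 → ℤ) : ℕ := ∑ f : Fin n → {i // i ∈ stS}, if okW n p f then 1 else 0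

lemma okW_cons (n : ℕ) (p : Fin 2 → ℤ) (s : {i // i ∈ stS}) (f : Fin n → {i // i ∈ stS}) :
    okW (n + 1) p (Fin.cons s f) ↔ (∀ j, 0 ≤ p j) ∧ okW n (p + s.1) f := by
  have key : ∀ m j, p j + ∑ k ∈ Finset.univ.filter (fun k : Fin (n + 1) => (k : ℕ) < m + 1),
      (((Fin.cons s f : Fin (n + 1) → {i // i ∈ stS}) k : Fin 2 → ℤ) j)
      = (p + s.1) j + ∑ k ∈ Finset.univ.filter (fun k : Fin n => (k : ℕ) < m), ((f k : Fin 2 → ℤ) j) := by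
    intro m j
    rw [Finset.sum_filter, Finset.sum_filter, Fin.sum_univ_succ]
    simp [add_assoc]
  constructor
  · intro h
    refine ⟨fun j => by simpa using h 0 (by omega) j, fun m hm j => ?_⟩
    rw [← key]
    exact h (m + 1) (by omega) j
  · rintro ⟨h0, h⟩ m hm j
    cases m with
    | zero => simpa using h0 j
    | succ m => rw [key]; exact h m (by omega) j

lemma cnW_succ (n : ℕ) (p : Fin 2 → ℤ) (hp : ∀ j, 0 ≤ p j) :
    cnW (n + 1) p = ∑ s ∈ stS, cnW n (p + s) := by
  rw [← Finset.sum_coe_sort stS]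
  simp only [cnW]
  rw [← (Fin.consEquiv (fun _ : Fin (n + 1) => {i // i ∈ stS})).sum_comp, Fintype.sum_prod_type]
  refine Finset.sum_congr rfl fun s _ => Finset.sum_congr rfl fun f _ => ?_
  have : (Fin.consEquiv (fun _ : Fin (n + 1) => {i // i ∈ stS})) (s, f) = Fin.cons s f := rfl
  rw [this]
  have h := okW_cons n p s f
  simp only [h, hp, implies_true, true_and]

lemma cnW_out (n : ℕ) (p : Fin 2 → ℤ) (j) (hp : p j < 0) : cnW n p = 0 := by
  refine Finset.sum_eq_zero fun f _ => if_neg fun h => ?_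
  have := h 0 (by omega) j
  simp at this
  omega

lemma sum_stS (g : (Fin 2 → ℤ) → ℕ) :
    ∑ s ∈ stS, g s = g ![0, 1] + (g ![0, -1] + (g ![1, 0] + g ![-1, 0])) := by
  rw [Finset.sum_insert, Finset.sum_insert, Finset.sum_insert, Finset.sum_singleton] <;> decide

lemma cnW_eq (n : ℕ) : ∀ x y : ℤ, 0 ≤ x → 0 ≤ y → cnW n ![x, y] = bxF n x y := by
  induction n with
  | zero =>
    intro x y hx hy
    rw [bxF_zero x y hx hy]
    have : ∀ f, okW 0 ![x, y] f := by
      intro f m hm j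
      fin_cases j <;> simpa
    simp [cnW, this]
  | succ n ih =>
    have ih' : ∀ x y : ℤ, -1 ≤ x → -1 ≤ y → cnW n ![x, y] = bxF n x y := by
      intro x y hx hy
      by_cases h1 : x = -1
      · rw [bxF_out n x y (Or.inl h1), cnW_out n _ 0 (by simp [h1])]
      by_cases h2 : y = -1
      · rw [bxF_out n x y (Or.inr h2), cnW_out n _ 1 (by simp [h2])]
      exact ih x y (by omega) (by omega)
    intro x y hx hy
    rw [cnW_succ n _ (by intro j; fin_cases j <;> simpa), bxF_succ n x y hx hy, sum_stS]
    simp only [Matrix.cons_add_cons, Matrix.empty_add_empty, add_zero, ← sub_eq_add_neg]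
    rw [ih' _ _ (by omega) (by omega), ih' _ _ (by omega) (by omega),
      ih' _ _ (by omega) (by omega), ih' _ _ (by omega) (by omega)]
    omega

lemma numWalks_eq (n : ℕ) : numWalks 2 stS n = bxF n 0 0 := by
  rw [← cnW_eq n 0 0 le_rfl le_rfl, numWalks, Finset.card_filter, cnW]
  refine Finset.sum_congr rfl fun f _ => ?_
  congr 1
  refine propext (forall_congr' fun m => forall_congr' fun _ => forall_congr' fun j => ?_)
  fin_cases j <;> simp

lemma bxF_val (n : ℕ) : bxF n 0 0 =
    frW n 0 * (frW n 0 + frW n 2) + 2 * frW n 1 * frW n 1 := by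
  have h : Ico (-0 : ℤ) (0 + 2) = {0, 1} := by decide
  have h1 := frW_neg n 1
  simp only [bxF, h, frN]
  simp [h1]
  ring

lemma numWalks_even (m : ℕ) : numWalks 2 stS (2 * m) = m.centralBinom * (2 * m + 1).choose (m + 1) := by
  rw [numWalks_eq, bxF_val, frW_odd (2 * m) 1 (by push_cast; omega)]
  have h0 := frW_choose (2 * m) m
  have h2 := frW_choose (2 * m) (m + 1)
  push_cast at h0 h2
  rw [show (2 * m - 2 * m : ℤ) = 0 by ring] at h0
  rw [show (2 * (m + 1) - 2 * m : ℤ) = 2 by ring] at h2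
  rw [h0, h2, Nat.choose_succ_succ, Nat.centralBinom]
  ring

lemma numWalks_odd (m : ℕ) : numWalks 2 stS (2 * m + 1) =
    2 * (2 * m + 1).choose (m + 1) * (2 * m + 1).choose (m + 1) := by
  rw [numWalks_eq, bxF_val, frW_odd (2 * m + 1) 0 (by push_cast; omega)]
  have h0 := frW_choose (2 * m + 1) (m + 1)
  push_cast at h0
  rw [show (2 * (m + 1) - (2 * m + 1) : ℤ) = 1 by ring] at h0
  rw [h0]
  ring

lemma cb_tendsto : Tendsto (fun m : ℕ => (m.centralBinom : ℝ) ^ 2 * (2 * m + 1) / 16 ^ m)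
    atTop (nhds (2 / π)) := by
  have h := Real.Wallis.tendsto_W_nhds_pi_div_two.inv₀ (by positivity)
  rw [show (π / 2)⁻¹ = 2 / π by simp] at h
  refine h.congr fun m => ?_
  rw [Real.Wallis.W_eq_factorial_ratio]
  have : (m.centralBinom : ℝ) = (2 * m).factorial / (m.factorial * m.factorial) := by
    rw [Nat.centralBinom, Nat.cast_choose ℝ (by omega), show 2 * m - m = m by omega]
  rw [this, pow_mul]
  field_simp
  norm_num

lemma half_cb (m : ℕ) : (2 * ((2 * m + 1).choose (m + 1) : ℝ)) = (m + 1).centralBinom := by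
  have h := Nat.choose_symm_half m
  have h' := Nat.choose_succ_succ (2 * m + 1) m
  rw [Nat.centralBinom, show 2 * (m + 1) = (2 * m + 1) + 1 by ring, h', ← h]
  push_cast
  simp only [Nat.succ_eq_add_one]
  ring

lemma frac_tendsto (a b c d : ℝ) (hc : c ≠ 0) :
    Tendsto (fun m : ℕ => (a * m + b) / (c * m + d)) atTop (nhds (a / c)) := by
  simpa only [add_comm] using tendsto_add_mul_div_add_mul_atTop_nhds b d a hc

theorem cardinal_directions_asymptotics :
    Tendsto (fun n : ℕ =>
      (numWalks 2 ({![0, 1], ![0, -1], ![1, 0], ![-1, 0]} : Finset (Fin 2 → ℤ)) n : ℝ) /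
        ((4 / π) * 4 ^ n / n))
      atTop (nhds 1) := by
  have hpi : π ≠ 0 := Real.pi_ne_zero
  have heven : Tendsto (fun m : ℕ => (numWalks 2 stS (2 * m) : ℝ) /
      ((4 / π) * 4 ^ (2 * m) / (2 * m : ℕ))) atTop (nhds 1) := by
    have h := (cb_tendsto.mul (frac_tendsto 2 0 1 1 one_ne_zero)).mul_const (π / 4)
    rw [show 2 / π * (2 / 1) * (π / 4) = 1 by field_simp; norm_num] at h
    refine h.congr fun m => ?_
    rw [numWalks_even]
    have h1 := half_cb m
    have h2 : ((m : ℝ) + 1) * (m + 1).centralBinom = 2 * (2 * m + 1) * m.centralBinom := by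
      exact_mod_cast Nat.succ_mul_centralBinom_succ m
    have h3 : ((2 * m + 1).choose (m + 1) : ℝ) = (2 * m + 1) * m.centralBinom / (m + 1) := by
      field_simp
      linarith [congrArg (fun z => z * ((m : ℝ) + 1)) h1]
    push_cast
    rw [h3, pow_mul]
    norm_num
    field_simp
  have hodd : Tendsto (fun m : ℕ => (numWalks 2 stS (2 * m + 1) : ℝ) /
      ((4 / π) * 4 ^ (2 * m + 1) / (2 * m + 1 : ℕ))) atTop (nhds 1) := by
    have h := ((cb_tendsto.comp (tendsto_add_atTop_nat 1)).mul
      (frac_tendsto 2 1 2 3 two_ne_zero)).mul_const (π / 2)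
    rw [show 2 / π * (2 / 2) * (π / 2) = 1 by field_simp] at h
    refine h.congr fun m => ?_
    rw [numWalks_odd]
    simp only [Function.comp]
    rw [← half_cb]
    push_cast
    rw [pow_succ (4 : ℝ), pow_mul, pow_succ (16 : ℝ)]
    norm_num
    field_simp
    ring
  rw [Metric.tendsto_atTop] at heven hodd ⊢
  intro ε hε
  obtain ⟨N1, h1⟩ := heven ε hε
  obtain ⟨N2, h2⟩ := hodd ε hε
  refine ⟨2 * N1 + 2 * N2 + 2, fun n hn => ?_⟩
  rcases Nat.even_or_odd' n with ⟨m, rfl | rfl⟩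
  · exact h1 m (by omega)
  · exact h2 m (by omega)

end
end

section
/- For the unweighted two-dimensional step set S = {(-1,-1), (1,-1), (0,1)}, the number s_n of walks of length n taking steps in S, starting at the origin, and remaining in ℕ^2 satisfies: s_n ∼ (24√2/π) · (2√2)^n / n^2 along even n, and s_n ∼ (32/π) · (2√2)^n / n^2 along odd n. -/
open Finset Filter
open scoped Classical Real

noncomputable section

def xB : ℕ → ℕ → ℕ → ℕ
  | _, 0, _ => 0
  | 0, _ + 1, 0 => 1
  | 0, _ + 1, _ + 1 => 0
  | n + 1, p + 1, 0 => xB n (p + 2) 0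
  | n + 1, p + 1, k + 1 => xB n (p + 2) (k + 1) + xB n p k

def xV : ℕ → ℕ → ℕ
  | _, 0 => 0
  | 0, _ + 1 => 1
  | k + 1, p + 1 => xV k p + xV k (p + 2)

lemma xB_zero (n k : ℕ) : xB n 0 k = 0 := by cases n <;> simp [xB]
lemma xV_zero (n : ℕ) : xV n 0 = 0 := by cases n <;> simp [xV]

lemma xB_gt (n : ℕ) : ∀ b k, n < k → xB n b k = 0 := by
  induction n with
  | zero =>
    intro b k h
    obtain ⟨k, rfl⟩ : ∃ k', k = k' + 1 := ⟨k - 1, by omega⟩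
    cases b <;> simp [xB]
  | succ n ih =>
    intro b k h
    obtain ⟨k, rfl⟩ : ∃ k', k = k' + 1 := ⟨k - 1, by omega⟩
    cases b with
    | zero => simp [xB]
    | succ b => rw [xB, ih _ _ (by omega), ih _ _ (by omega)]

lemma xB_dead (n : ℕ) : ∀ b k, n + b ≤ 2 * k → xB n b k = 0 := by
  induction n with
  | zero =>
    intro b k h
    cases b with
    | zero => simp [xB]
    | succ b =>
      obtain ⟨k, rfl⟩ : ∃ k', k = k' + 1 := ⟨k - 1, by omega⟩
      simp [xB]
  | succ n ih =>
    intro b k h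
    cases b with
    | zero => simp [xB]
    | succ b =>
      obtain ⟨k, rfl⟩ : ∃ k', k = k' + 1 := ⟨k - 1, by omega⟩
      rw [xB, ih _ _ (by omega), ih _ _ (by omega)]

lemma xB_formula (n : ℕ) : ∀ b k, 2 * k ≤ n + b →
    xB n b k + (if b ≤ k then n.choose (k - b) else 0) = n.choose k := by
  induction n with
  | zero =>
    intro b k h
    cases b with
    | zero => simp [xB]
    | succ b =>
      cases k with
      | zero => simp [xB]
      | succ k => simp [xB]; omega
  | succ n ih =>
    intro b k h
    cases b with
    | zero => simp [xB]
    | succ b =>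
      cases k with
      | zero =>
        have := ih (b + 2) 0 (by omega)
        simpa [xB] using this
      | succ k =>
        have h1 := ih (b + 2) (k + 1) (by omega)
        have h2 := ih b k (by omega)
        rw [xB, Nat.choose_succ_succ]
        by_cases h3 : b + 2 ≤ k + 1
        · obtain ⟨c, rfl⟩ : ∃ c, k = b + 1 + c := ⟨k - (b + 1), by omega⟩
          rw [if_pos (by omega)] at h1 h2 ⊢
          rw [show b + 1 + c + 1 - (b + 1) = c + 1 by omega, Nat.choose_succ_succ]
          rw [show b + 1 + c + 1 - (b + 2) = c by omega] at h1
          rw [show b + 1 + c - b = c + 1 by omega] at h2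
          simp only [Nat.succ_eq_add_one] at *
          omega
        · rw [if_neg h3] at h1
          by_cases h4 : b ≤ k
          · rw [if_pos h4] at h2
            rw [if_pos (by omega)]
            have : k = b := by omega
            subst this
            simp only [Nat.succ_eq_add_one, Nat.sub_self, Nat.choose_zero_right] at *
            omega
          · rw [if_neg h4] at h2
            rw [if_neg (by omega)]
            simp only [Nat.succ_eq_add_one] at *
            omega

lemma xV_sum (k : ℕ) : ∀ a, xV k a = ∑ d ∈ range (k + 1), xB k a d := by
  induction k with
  | zero => intro a; cases a <;> simp [xV, xB]
  | succ k ih =>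
    intro a
    cases a with
    | zero => simp [xV, xB]
    | succ a =>
      rw [xV, ih, ih, Finset.sum_range_succ' _ (k + 1)]
      simp only [xB, Finset.sum_add_distrib]
      have := Finset.sum_range_succ' (fun d => xB k (a + 2) d) (k + 1)
      rw [Finset.sum_range_succ, xB_gt k _ (k + 1) (by omega)] at this
      omega

lemma xB_one_partial (k : ℕ) (m : ℕ) (h : 2 * m ≤ k + 1) :
    ∑ d ∈ range (m + 1), xB k 1 d = k.choose m := by
  induction m with
  | zero =>
    have := xB_formula k 1 0 (by omega)
    simpa using this
  | succ m ih =>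
    rw [Finset.sum_range_succ, ih (by omega)]
    have := xB_formula k 1 (m + 1) (by omega)
    simp at this
    omega

lemma xV_one (k : ℕ) : xV k 1 = k.choose (k / 2) := by
  rw [xV_sum, ← xB_one_partial k (k / 2) (by omega)]
  symm
  apply Finset.sum_subset
  · intro x; simp; omega
  · intro x _ hx
    apply xB_dead
    simp at hx
    omega

abbrev xS : Finset (Fin 2 → ℤ) := {![-1, -1], ![1, -1], ![0, 1]}

def xP (n : ℕ) (x y : ℤ) (f : Fin n → {i // i ∈ xS}) : Prop :=
  ∀ m : ℕ, m ≤ n →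
    0 ≤ x + ∑ k ∈ Finset.univ.filter (fun k : Fin n => (k : ℕ) < m), ((f k : Fin 2 → ℤ) 0) ∧
    0 ≤ y + ∑ k ∈ Finset.univ.filter (fun k : Fin n => (k : ℕ) < m), ((f k : Fin 2 → ℤ) 1)

def xW (n : ℕ) (x y : ℤ) : ℕ := ∑ f : Fin n → {i // i ∈ xS}, if xP n x y f then 1 else 0

lemma numWalks_eq_s15 (n : ℕ) : numWalks 2 xS n = xW n 0 0 := by
  unfold numWalks xW
  rw [Finset.card_filter]
  apply Finset.sum_congr rfl
  intro f _
  congr 1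
  simp [xP, Fin.forall_fin_two]

lemma xW_neg (n : ℕ) (x y : ℤ) (h : x < 0 ∨ y < 0) : xW n x y = 0 := by
  apply Finset.sum_eq_zero
  intro f _
  rw [if_neg]
  intro hp
  have := hp 0 (by omega)
  simp at this
  omega

lemma xP_cons (n : ℕ) (x y : ℤ) (s : {i // i ∈ xS}) (f : Fin n → {i // i ∈ xS}) :
    xP (n + 1) x y (Fin.cons s f) ↔ (0 ≤ x ∧ 0 ≤ y) ∧ xP n (x + s.1 0) (y + s.1 1) f := by
  unfold xP
  constructor
  · intro h
    refine ⟨by simpa using h 0 (by omega), fun m hm => ?_⟩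
    have := h (m + 1) (by omega)
    simpa [Finset.sum_filter, Fin.sum_univ_succ, add_assoc] using this
  · rintro ⟨h0, h⟩ m hm
    cases m with
    | zero => simpa using h0
    | succ m =>
      have := h m (by omega)
      simpa [Finset.sum_filter, Fin.sum_univ_succ, add_assoc] using this

lemma xW_succ (n : ℕ) (x y : ℤ) (hx : 0 ≤ x) (hy : 0 ≤ y) :
    xW (n + 1) x y = xW n (x - 1) (y - 1) + xW n (x + 1) (y - 1) + xW n x (y + 1) := by
  have h1 : xW (n + 1) x y = ∑ s : {i // i ∈ xS}, xW n (x + s.1 0) (y + s.1 1) := by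
    unfold xW
    rw [← (Fin.consEquiv (fun _ : Fin (n + 1) => {i // i ∈ xS})).sum_comp, Fintype.sum_prod_type]
    apply Finset.sum_congr rfl
    intro s _
    apply Finset.sum_congr rfl
    intro f _
    congr 1
    have := xP_cons n x y s f
    simp only [hx, hy, and_self, true_and] at this
    exact propext this
  rw [h1, Finset.sum_coe_sort xS (fun s => xW n (x + s 0) (y + s 1))]
  rw [Finset.sum_insert, Finset.sum_insert, Finset.sum_singleton]
  · simp [sub_eq_add_neg, add_assoc]
  · simp
  · simp

lemma xW_eq (n : ℕ) : ∀ a b : ℕ,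
    xW n ((a : ℤ) - 1) ((b : ℤ) - 1) = ∑ k ∈ range (n + 1), xB n b k * xV k a := by
  induction n with
  | zero =>
    intro a b
    rcases a with _ | a
    · rw [xW_neg _ _ _ (by simp)]; simp [xV]
    rcases b with _ | b
    · rw [xW_neg _ _ _ (by simp)]; simp [xB]
    simp [xW, xP, xV, xB]
  | succ n ih =>
    intro a b
    rcases a with _ | a
    · rw [xW_neg _ _ _ (by simp)]; simp [xV_zero]
    rcases b with _ | b
    · rw [xW_neg _ _ _ (by simp)]; simp [xB_zero]
    rw [xW_succ _ _ _ (by simp) (by simp)]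
    have e1 := ih a b
    have e2 := ih (a + 2) b
    have e3 := ih (a + 1) (b + 2)
    push_cast at e1 e2 e3 ⊢
    rw [show (a : ℤ) + 1 - 1 - 1 = a - 1 by ring, show (b : ℤ) + 1 - 1 - 1 = b - 1 by ring,
      show (a : ℤ) + 1 - 1 + 1 = a + 2 - 1 by ring, show (b : ℤ) + 1 - 1 + 1 = b + 2 - 1 by ring,
      e1, e2, e3, Finset.sum_range_succ' _ (n + 1)]
    simp only [xB, xV, add_mul, mul_add, Finset.sum_add_distrib]
    have := Finset.sum_range_succ' (fun d => xB n (b + 2) d * xV d (a + 1)) (n + 1)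
    rw [Finset.sum_range_succ, xB_gt n _ (n + 1) (by omega)] at this
    simp only [xV, mul_add, Finset.sum_add_distrib] at this
    omega

lemma xmain (n : ℕ) : numWalks 2 xS n =
    ∑ k ∈ range (n / 2 + 1), xB n 1 k * k.choose (k / 2) := by
  rw [numWalks_eq_s15]
  have := xW_eq n 1 1
  simp only [Nat.cast_one, sub_self, xV_one] at this
  rw [this]
  symm
  apply Finset.sum_subset
  · intro x; simp; omega
  · intro x _ hx
    rw [xB_dead, zero_mul]
    simp at hx
    omega

lemma xB_real (n k : ℕ) (h : 2 * k ≤ n) :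
    (xB n 1 k : ℝ) = ((n : ℝ) - 2 * k + 1) / ((n : ℝ) - k + 1) * n.choose k := by
  have h1 := xB_formula n 1 k (by omega)
  have hk : (k : ℝ) ≤ n := by exact_mod_cast (by omega : k ≤ n)
  have hpos : (0 : ℝ) < (n : ℝ) - k + 1 := by linarith
  rw [div_mul_eq_mul_div, eq_div_iff hpos.ne']
  cases k with
  | zero => simp at h1; simp [h1]
  | succ k =>
    simp at h1
    have h2 := Nat.choose_succ_right_eq n k
    have h3 : (n.choose (k + 1) : ℝ) * (k + 1) = n.choose k * ((n : ℝ) - k) := by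
      rw [← Nat.cast_sub (by omega)]; exact_mod_cast h2
    have h4 : (xB n 1 (k + 1) : ℝ) = n.choose (k + 1) - n.choose k := by
      rw [← h1]; push_cast; ring
    rw [h4]; push_cast
    linear_combination h3

open Topology in
lemma x_central : Tendsto (fun m : ℕ => ((2 * m).choose m : ℝ) * √m / 4 ^ m) atTop (𝓝 (1 / √π)) := by
  have hS := Stirling.tendsto_stirlingSeq_sqrt_pi
  have h2 : Tendsto (fun m : ℕ => 2 * m) atTop atTop :=
    tendsto_id.const_mul_atTop' (by norm_num)
  have h := (hS.comp h2).div (hS.pow 2) (by positivity)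
  have e : √π / √π ^ 2 = 1 / √π := by
    have : √π ≠ 0 := by positivity
    field_simp
  rw [e] at h
  refine h.congr' ?_
  filter_upwards [eventually_gt_atTop 0] with m hm
  have hm' : (0 : ℝ) < m := by exact_mod_cast hm
  have hc : ((2 * m).choose m : ℝ) * (m.factorial : ℝ) ^ 2 = (2 * m).factorial := by
    have := Nat.choose_mul_factorial_mul_factorial (n := 2 * m) (k := m) (by omega)
    rw [show 2 * m - m = m by omega] at this
    rw [← this]; push_cast; ring
  simp only [Pi.div_apply, Function.comp, Stirling.stirlingSeq]
  rw [← hc]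
  have hf : (m.factorial : ℝ) ≠ 0 := by positivity
  have hs : √(2 * ((2 * m : ℕ) : ℝ)) = 2 * √m := by
    rw [show 2 * ((2 * m : ℕ) : ℝ) = 2 ^ 2 * m by push_cast; ring, Real.sqrt_mul (by norm_num),
      Real.sqrt_sq (by norm_num)]
  have hs2 : √(2 * (m : ℝ)) ^ 2 = 2 * m := Real.sq_sqrt (by positivity)
  have hm2 : √(m : ℝ) ^ 2 = m := Real.sq_sqrt (by positivity)
  have hp : ((2 * m : ℕ) / Real.exp 1 : ℝ) ^ (2 * m) = 4 ^ m * ((m / Real.exp 1 : ℝ) ^ m) ^ 2 := by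
    push_cast
    rw [mul_div_assoc, mul_pow, pow_mul 2, ← pow_mul (_ / _) m 2, mul_comm m 2]; norm_num
  have hx : ((m / Real.exp 1 : ℝ) ^ m) ≠ 0 := by positivity
  have hsm : √(m : ℝ) ≠ 0 := by positivity
  rw [hs, hp]
  generalize ((m / Real.exp 1 : ℝ) ^ m) = X at *
  rw [div_pow, mul_pow, hs2]
  field_simp
  linear_combination (-((2 * m).choose m : ℝ)) * hm2

open Topology in
lemma x_ratio (a b : ℝ) : Tendsto (fun m : ℕ => ((m : ℝ) + a) / (m + b)) atTop (𝓝 1) := by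
  have h1 : Tendsto (fun m : ℕ => (m : ℝ)) atTop atTop := tendsto_natCast_atTop_atTop
  have h2 : Tendsto (fun m : ℕ => (m : ℝ) + b) atTop atTop := tendsto_atTop_add_const_right _ _ h1
  have h3 : Tendsto (fun m : ℕ => 1 + (a - b) / ((m : ℝ) + b)) atTop (𝓝 (1 + 0)) :=
    tendsto_const_nhds.add (h2.const_div_atTop _)
  rw [add_zero] at h3
  refine h3.congr' ?_
  filter_upwards [h2.eventually_gt_atTop 0] with m hm
  field_simp
  ring

open Topology in
lemma x_ratio_sqrt (a b : ℝ) : Tendsto (fun m : ℕ => √((m : ℝ) + a) / √(m + b)) atTop (𝓝 1) := by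
  have := (x_ratio a b).sqrt
  rw [Real.sqrt_one] at this
  refine this.congr' ?_
  have h1 : Tendsto (fun m : ℕ => (m : ℝ)) atTop atTop := tendsto_natCast_atTop_atTop
  filter_upwards [h1.eventually_gt_atTop (-a)] with m hm
  rw [Real.sqrt_div (by linarith)]

open Topology in
/-- central coefficient for `2 m + 1` -/
lemma x_central_odd : Tendsto (fun m : ℕ => ((2 * m + 1).choose m : ℝ) * √m / 4 ^ m) atTop
    (𝓝 (2 / √π)) := by
  have h := (x_central.mul (x_ratio (1 / 2) 1)).const_mul 2
  rw [show 2 * (1 / √π * 1) = 2 / √π by ring] at h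
  refine h.congr fun m => ?_
  have : ((2 * m + 1).choose m : ℝ) * (m + 1) = (2 * m + 1) * (2 * m).choose m := by
    have := Nat.add_one_mul_choose_eq (2 * m) m
    have h2 := Nat.choose_symm_half m
    rw [h2] at this
    rw [mul_comm (2 * (m : ℝ) + 1)]
    have h5 : (2 * m + 1) * (2 * m).choose m = (2 * m + 1).choose m * (m + 1) := this
    have h6 : ((2 * m + 1) * (2 * m).choose m : ℝ) = (2 * m + 1).choose m * (m + 1) := by
      exact_mod_cast h5
    linear_combination -h6
  have hm : (0 : ℝ) < m + 1 := by positivity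
  rw [show ((2 * m + 1).choose m : ℝ) = (2 * m + 1) * (2 * m).choose m / (m + 1) by
    rw [eq_div_iff hm.ne', this]]
  field_simp

open Topology in
lemma x_e (r : ℕ) (L : ℝ)
    (hr : Tendsto (fun m : ℕ => ((2 * m + r).choose m : ℝ) * √m / 4 ^ m) atTop (𝓝 L)) (j : ℕ) :
    Tendsto (fun m : ℕ => ((2 * m + r).choose (m - j) : ℝ) * √m / 4 ^ m) atTop (𝓝 L) := by
  induction j with
  | zero => simpa using hr
  | succ j ih =>
    have h := ih.mul (x_ratio (-j) (r + j + 1))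
    rw [mul_one] at h
    refine h.congr' ?_
    filter_upwards [eventually_gt_atTop j] with m hm
    obtain ⟨c, rfl⟩ : ∃ c, m = j + 1 + c := ⟨m - (j + 1), by omega⟩
    have h2 := Nat.choose_succ_right_eq (2 * (j + 1 + c) + r) c
    rw [show j + 1 + c - j = c + 1 by omega, show j + 1 + c - (j + 1) = c by omega]
    rw [show 2 * (j + 1 + c) + r - c = 2 * j + 2 + c + r by omega] at h2
    have h3 : ((2 * (j + 1 + c) + r).choose (c + 1) : ℝ) * (c + 1)
      = (2 * (j + 1 + c) + r).choose c * (2 * j + 2 + c + r) := by exact_mod_cast h2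
    push_cast
    have hp : (0 : ℝ) < (j + 1 + c + (r + j + 1)) := by positivity
    field_simp
    linear_combination h3

open Topology in
lemma x_even_odd (u : ℕ → ℝ) (L : ℝ) (h0 : Tendsto (fun m => u (2 * m)) atTop (𝓝 L))
    (h1 : Tendsto (fun m => u (2 * m + 1)) atTop (𝓝 L)) : Tendsto u atTop (𝓝 L) := by
  rw [Metric.tendsto_atTop] at *
  intro ε hε
  obtain ⟨N0, h0⟩ := h0 ε hε
  obtain ⟨N1, h1⟩ := h1 ε hε
  refine ⟨2 * N0 + 2 * N1 + 2, fun n hn => ?_⟩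
  rcases Nat.even_or_odd' n with ⟨c, rfl | rfl⟩
  · exact h0 c (by omega)
  · exact h1 c (by omega)

open Topology in
lemma x_c : Tendsto (fun m : ℕ => (m.choose (m / 2) : ℝ) * √((m : ℝ) + 1) / 2 ^ m) atTop
    (𝓝 (√2 / √π)) := by
  apply x_even_odd
  · have h := (x_central.mul (x_ratio_sqrt (1 / 2) 0)).const_mul √2
    rw [show √2 * (1 / √π * 1) = √2 / √π by ring] at h
    refine h.congr' ?_
    filter_upwards [eventually_gt_atTop 0] with m hm
    have hm' : (0 : ℝ) < m := by exact_mod_cast hm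
    have hs : √((2 * m : ℕ) + 1 : ℝ) = √2 * √(m + 1 / 2 : ℝ) := by
      rw [← Real.sqrt_mul (by norm_num)]; congr 1; push_cast; ring
    rw [hs, show 2 * m / 2 = m by omega, pow_mul, add_zero]
    have : √(m : ℝ) ≠ 0 := by positivity
    norm_num
    field_simp
  · have h := (x_central_odd.mul (x_ratio_sqrt 1 0)).const_mul (√2 / 2)
    rw [show √2 / 2 * (2 / √π * 1) = √2 / √π by ring] at h
    refine h.congr' ?_
    filter_upwards [eventually_gt_atTop 0] with m hm
    have hm' : (0 : ℝ) < m := by exact_mod_cast hm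
    have hs : √((2 * m + 1 : ℕ) + 1 : ℝ) = √2 * √(m + 1 : ℝ) := by
      rw [← Real.sqrt_mul (by norm_num)]; congr 1; push_cast; ring
    rw [hs, show (2 * m + 1) / 2 = m by omega, pow_succ, pow_mul, add_zero]
    have : √(m : ℝ) ≠ 0 := by positivity
    norm_num
    field_simp

def xT (r m j : ℕ) : ℝ :=
  if j ≤ m then (m : ℝ) ^ 2 / 8 ^ m * (xB (2 * m + r) 1 (m - j) * (m - j).choose ((m - j) / 2) : ℕ)
  else 0

lemma xT_eq (r m j : ℕ) (hm : 0 < m) (hj : j ≤ m) :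
    xT r m j = (2 * j + 1 + r) * (1 / 2) ^ j * ((m : ℝ) / (m + (j + 1 + r))) *
      (((2 * m + r).choose (m - j) : ℝ) * √m / 4 ^ m) *
      (((m - j).choose ((m - j) / 2) : ℝ) * √(((m - j : ℕ) : ℝ) + 1) / 2 ^ (m - j)) *
      (√m / √(((m - j : ℕ) : ℝ) + 1)) := by
  rw [xT, if_pos hj]
  push_cast
  rw [xB_real _ _ (by omega)]
  obtain ⟨c, rfl⟩ : ∃ c, m = j + c := ⟨m - j, by omega⟩
  rw [show j + c - j = c by omega]
  have h8 : (8 : ℝ) ^ (j + c) = 4 ^ (j + c) * (2 ^ j * 2 ^ c) := by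
    rw [← pow_add, ← mul_pow]; norm_num
  have hs : √((j + c : ℕ) : ℝ) ^ 2 = (j + c : ℕ) := Real.sq_sqrt (by positivity)
  rw [h8, one_div, inv_pow]
  have hd : (0 : ℝ) < ((2 * (j + c) + r : ℕ) : ℝ) - c + 1 := by
    push_cast
    have : (0 : ℝ) ≤ 2 * j + c + r := by positivity
    linarith
  have hd2 : ((j + c : ℕ) : ℝ) + (j + 1 + r) = ((2 * (j + c) + r : ℕ) : ℝ) - c + 1 := by
    push_cast; ring
  have hn : ((2 * (j + c) + r : ℕ) : ℝ) - 2 * c + 1 = 2 * j + 1 + r := by push_cast; ring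
  rw [hd2, hn]
  generalize ((2 * (j + c) + r : ℕ) : ℝ) - c + 1 = D at *
  have hc : √((c : ℝ) + 1) ≠ 0 := by positivity
  field_simp
  rw [hs]
  ring

open Topology in
lemma x_lim (r : ℕ) (L : ℝ)
    (hr : Tendsto (fun m : ℕ => ((2 * m + r).choose m : ℝ) * √m / 4 ^ m) atTop (𝓝 L)) (j : ℕ) :
    Tendsto (fun m : ℕ => xT r m j) atTop
      (𝓝 ((2 * j + 1 + r) * (1 / 2) ^ j * (L * (√2 / √π)))) := by
  have h1 := x_ratio 0 (j + 1 + r)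
  have h2 := x_e r L hr j
  have h3 := x_c.comp (tendsto_sub_atTop_nat j)
  have h4 := x_ratio_sqrt 0 (1 - j)
  have h := (((h1.const_mul ((2 * (j : ℝ) + 1 + r) * (1 / 2) ^ j)).mul h2).mul h3).mul h4
  rw [show (2 * (j : ℝ) + 1 + r) * (1 / 2) ^ j * 1 * L * (√2 / √π) * 1 =
    (2 * j + 1 + r) * (1 / 2) ^ j * (L * (√2 / √π)) by ring] at h
  refine h.congr' ?_
  filter_upwards [eventually_gt_atTop j] with m hm
  rw [xT_eq r m j (by omega) (by omega)]
  have : ((m - j : ℕ) : ℝ) + 1 = m + (1 - j) := by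
    rw [Nat.cast_sub (by omega)]; ring
  simp only [Function.comp, add_zero, this]

open Topology in
lemma x_bound (r : ℕ) (hr1 : r ≤ 1) (L : ℝ)
    (hr : Tendsto (fun m : ℕ => ((2 * m + r).choose m : ℝ) * √m / 4 ^ m) atTop (𝓝 L)) :
    ∃ K : ℝ, ∀ m j : ℕ, 0 < m → ‖xT r m j‖ ≤ K * (((j : ℝ) + 1) ^ 2 * (1 / 2) ^ j) := by
  obtain ⟨K1, hK1⟩ := hr.bddAbove_range
  obtain ⟨K2, hK2⟩ := x_c.bddAbove_range
  have hK1' : ∀ m : ℕ, ((2 * m + r).choose m : ℝ) * √m / 4 ^ m ≤ K1 := fun m => hK1 ⟨m, rfl⟩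
  have hK2' : ∀ m : ℕ, (m.choose (m / 2) : ℝ) * √((m : ℝ) + 1) / 2 ^ m ≤ K2 := fun m => hK2 ⟨m, rfl⟩
  have hK1p : 0 ≤ K1 := le_trans (by positivity) (hK1' 0)
  have hK2p : 0 ≤ K2 := le_trans (by positivity) (hK2' 0)
  refine ⟨2 * K1 * K2, fun m j hm => ?_⟩
  by_cases hj : j ≤ m
  swap
  · rw [xT, if_neg hj, norm_zero]; positivity
  have hm' : (0 : ℝ) < m := by exact_mod_cast hm
  rw [xT_eq r m j hm hj, Real.norm_of_nonneg (by positivity)]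
  have a0 : (2 * (j : ℝ) + 1 + r) ≤ 2 * (j + 1) := by
    have : (r : ℝ) ≤ 1 := by exact_mod_cast hr1
    linarith
  have a1 : (m : ℝ) / (m + (j + 1 + r)) ≤ 1 := by
    rw [div_le_one (by positivity)]
    have : (0 : ℝ) ≤ j + 1 + r := by positivity
    linarith
  have a2 : ((2 * m + r).choose (m - j) : ℝ) * √m / 4 ^ m ≤ K1 := by
    refine le_trans ?_ (hK1' m)
    have : (2 * m + r).choose (m - j) ≤ (2 * m + r).choose m := by
      have := Nat.choose_le_middle (m - j) (2 * m + r)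
      rwa [show (2 * m + r) / 2 = m by omega] at this
    have : ((2 * m + r).choose (m - j) : ℝ) ≤ (2 * m + r).choose m := by exact_mod_cast this
    gcongr
  have a3 := hK2' (m - j)
  have a4 : √m / √(((m - j : ℕ) : ℝ) + 1) ≤ j + 1 := by
    rw [div_le_iff₀ (by positivity)]
    obtain ⟨c, rfl⟩ : ∃ c, m = j + c := ⟨m - j, by omega⟩
    rw [show j + c - j = c by omega]
    apply Real.sqrt_le_iff.2
    refine ⟨by positivity, ?_⟩
    rw [mul_pow, Real.sq_sqrt (by positivity)]
    push_cast
    have : (0 : ℝ) ≤ j := by positivity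
    have : (0 : ℝ) ≤ c := by positivity
    have : (0 : ℝ) ≤ j * c := by positivity
    have : (0 : ℝ) ≤ j ^ 2 * c := by positivity
    nlinarith
  calc _ ≤ (2 * ((j : ℝ) + 1)) * (1 / 2) ^ j * 1 * K1 * K2 * (j + 1) := by gcongr
    _ = _ := by ring

open Topology in
lemma x_sum (r : ℕ) (hr1 : r ≤ 1) (L : ℝ)
    (hr : Tendsto (fun m : ℕ => ((2 * m + r).choose m : ℝ) * √m / 4 ^ m) atTop (𝓝 L)) :
    Tendsto (fun m : ℕ => (m : ℝ) ^ 2 / 8 ^ m * (numWalks 2 xS (2 * m + r) : ℝ)) atTop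
      (𝓝 ((6 + 2 * r) * (L * (√2 / √π)))) := by
  obtain ⟨K, hK⟩ := x_bound r hr1 L hr
  have hh : ‖(1 / 2 : ℝ)‖ < 1 := by norm_num
  have s0 : Summable (fun j : ℕ => (1 / 2 : ℝ) ^ j) := summable_geometric_of_norm_lt_one hh
  have s1 := summable_pow_mul_geometric_of_norm_lt_one 1 hh
  have s2 := summable_pow_mul_geometric_of_norm_lt_one 2 hh
  have hsum : Summable (fun j : ℕ => K * (((j : ℝ) + 1) ^ 2 * (1 / 2) ^ j)) := by
    apply Summable.mul_left
    refine ((s2.add (s1.mul_left 2)).add s0).congr fun j => ?_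
    ring
  have h := tendsto_tsum_of_dominated_convergence (𝓕 := atTop) hsum (fun j => x_lim r L hr j)
    (by filter_upwards [eventually_gt_atTop 0] with m hm j using hK m j hm)
  have e : ∑' j : ℕ, ((2 * (j : ℝ) + 1 + r) * (1 / 2) ^ j * (L * (√2 / √π))) =
      (6 + 2 * r) * (L * (√2 / √π)) := by
    rw [tsum_mul_right]
    congr 1
    have t0 := hasSum_geometric_of_norm_lt_one hh
    have t1 := hasSum_coe_mul_geometric_of_norm_lt_one hh
    have := ((t1.mul_left 2).add (t0.mul_left (1 + (r : ℝ)))).tsum_eq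
    rw [show (6 + 2 * (r : ℝ)) = 2 * (1 / 2 / (1 - 1 / 2) ^ 2) + (1 + r) * (1 - 1 / 2)⁻¹ by
      norm_num; ring, ← this]
    congr 1
    ext j
    ring
  rw [e] at h
  refine h.congr fun m => ?_
  rw [tsum_eq_sum (s := range (m + 1)) (fun j hj => by
    rw [xT, if_neg (by simpa using hj)])]
  rw [xmain, show (2 * m + r) / 2 = m by omega, Nat.cast_sum, Finset.mul_sum,
    ← Finset.sum_range_reflect]
  apply Finset.sum_congr rfl
  intro j hj
  have : j ≤ m := by simp at hj; omega
  rw [xT, if_pos (by omega)]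
  rw [show m - (m + 1 - 1 - j) = j by omega]

/-- For the step set `{(-1,-1), (1,-1), (0,1)}` in `ℤ²`, the number of quarter-plane
walks satisfies `s_n ∼ (24√2/π)(2√2)^n/n²` along even `n` and
`s_n ∼ (32/π)(2√2)^n/n²` along odd `n`. -/
theorem negative_drift_example_asymptotics :
    Tendsto (fun k : ℕ =>
      (numWalks 2 ({![-1, -1], ![1, -1], ![0, 1]} : Finset (Fin 2 → ℤ)) (2 * k) : ℝ) /
        ((24 * Real.sqrt 2 / π) * (2 * Real.sqrt 2) ^ (2 * k) / ((2 * k : ℕ) : ℝ) ^ 2))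
      atTop (nhds 1) ∧
    Tendsto (fun k : ℕ =>
      (numWalks 2 ({![-1, -1], ![1, -1], ![0, 1]} : Finset (Fin 2 → ℤ)) (2 * k + 1) : ℝ) /
        ((32 / π) * (2 * Real.sqrt 2) ^ (2 * k + 1) / ((2 * k + 1 : ℕ) : ℝ) ^ 2))
      atTop (nhds 1) := by
  have hpi : √π ^ 2 = π := Real.sq_sqrt Real.pi_pos.le
  have hpi0 : √π ≠ 0 := by positivity
  have h20 : √2 ≠ 0 := by positivity
  have h22 : √2 ^ 2 = (2 : ℝ) := Real.sq_sqrt (by norm_num)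
  have h8 : ∀ k : ℕ, (2 * √2) ^ (2 * k) = (8 : ℝ) ^ k := by
    intro k
    rw [pow_mul, mul_pow, h22]; norm_num
  constructor
  · have h := (x_sum 0 (by omega) (1 / √π) x_central).mul_const (π / (6 * √2))
    have e : (6 + 2 * ((0 : ℕ) : ℝ)) * (1 / √π * (√2 / √π)) * (π / (6 * √2)) = 1 := by
      rw [← hpi]
      field_simp
      simp
    rw [e] at h
    refine h.congr fun k => ?_
    rw [h8, add_zero]
    generalize (numWalks 2 xS (2 * k) : ℝ) = s
    push_cast
    field_simp
    ring
  · have h := ((x_sum 1 (by omega) (2 / √π) x_central_odd).mul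
      ((x_ratio (1 / 2) 0).pow 2)).mul_const (π / (16 * √2))
    have e : (6 + 2 * ((1 : ℕ) : ℝ)) * (2 / √π * (√2 / √π)) * 1 ^ 2 * (π / (16 * √2)) = 1 := by
      rw [← hpi]
      field_simp
      norm_num
      ring
    rw [e] at h
    refine h.congr' ?_
    filter_upwards [eventually_gt_atTop 0] with k hk
    have hk' : (0 : ℝ) < k := by exact_mod_cast hk
    rw [pow_succ (2 * √2), h8, add_zero]
    generalize (numWalks 2 xS (2 * k + 1) : ℝ) = s
    push_cast
    field_simp
    ring

end
end

section
/- For the unweighted two-dimensional step set S = {(-1,1), (1,1), (0,-1)}, the number s_n of walks of length n taking steps in S, starting at the origin, and remaining in ℕ^2 satisfies s_n ∼ (√3 / (2√π)) · 3^n / √n as n → ∞. -/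
open Finset Filter
open scoped Classical Real

noncomputable section

def NWS (S : Finset (Fin 2 → ℤ)) (n : ℕ) (p : Fin 2 → ℤ) : ℕ :=
  Finset.card (Finset.univ.filter fun f : Fin n → {i // i ∈ S} =>
    ∀ m : ℕ, m ≤ n → ∀ j : Fin 2,
      0 ≤ p j + ∑ k ∈ Finset.univ.filter (fun k : Fin n => (k : ℕ) < m), ((f k : Fin 2 → ℤ) j))

lemma NWS_zero (S : Finset (Fin 2 → ℤ)) (p : Fin 2 → ℤ) :
    NWS S 0 p = if ∀ j, 0 ≤ p j then 1 else 0 := by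
  unfold NWS
  split_ifs with h
  · rw [Finset.filter_true_of_mem]
    · simp
    · intro f _ m hm j
      simpa using h j
  · rw [Finset.card_eq_zero, Finset.filter_eq_empty_iff]
    intro f _ hf
    exact h fun j => by simpa using hf 0 le_rfl j

lemma NWS_succ (S : Finset (Fin 2 → ℤ)) (n : ℕ) (p : Fin 2 → ℤ) :
    NWS S (n+1) p = ∑ s ∈ S, if ∀ j, 0 ≤ p j then NWS S n (p + s) else 0 := by
  rw [← Finset.sum_coe_sort S (fun s => if ∀ j, 0 ≤ p j then NWS S n (p + s) else 0)]
  unfold NWS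
  simp only [Finset.card_filter]
  rw [← (Fin.consEquiv (fun _ => {i // i ∈ S})).sum_comp, Fintype.sum_prod_type]
  refine Finset.sum_congr rfl fun s _ => ?_
  split_ifs with h
  · refine Finset.sum_congr rfl fun f _ => ?_
    refine if_congr ?_ rfl rfl
    constructor
    · intro H m hm j
      have := H (m+1) (by omega) j
      rw [Finset.sum_filter, Fin.sum_univ_succ] at this
      simp [Fin.consEquiv, ← Finset.sum_filter] at this
      simp only [Pi.add_apply]
      linarith
    · intro H m hm j
      rcases m with _ | m
      · simpa using h j
      · have := H m (by omega) j
        rw [Finset.sum_filter, Fin.sum_univ_succ]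
        simp [Fin.consEquiv, ← Finset.sum_filter]
        simp only [Pi.add_apply] at this
        linarith
  · refine Finset.sum_eq_zero fun f _ => ?_
    rw [if_neg]
    intro H
    exact h fun j => by simpa using H 0 (by omega) j

def NW (n : ℕ) (p : Fin 2 → ℤ) : ℕ :=
  NWS ({![-1, 1], ![1, 1], ![0, -1]} : Finset (Fin 2 → ℤ)) n p

lemma NW_zero (p : Fin 2 → ℤ) : NW 0 p = if ∀ j, 0 ≤ p j then 1 else 0 := NWS_zero _ p

lemma NW_succ (n : ℕ) (p : Fin 2 → ℤ) : NW (n+1) p = if ∀ j, 0 ≤ p j then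
    NW n (p + ![-1, 1]) + NW n (p + ![1, 1]) + NW n (p + ![0, -1]) else 0 := by
  unfold NW
  rw [NWS_succ]
  split_ifs with h
  · rw [Finset.sum_insert, Finset.sum_insert, Finset.sum_singleton, add_assoc]
    all_goals decide
  · simp

def XX : ℕ → ℕ → ℕ
  | 0, _ => 1
  | k+1, 0 => XX k 1
  | k+1, x+1 => XX k (x+2) + XX k x

def YY : ℕ → ℕ → ℕ → ℕ
  | 0, 0, _ => 1
  | 0, _+1, _ => 0
  | _+1, 0, 0 => 0
  | n+1, 0, y+1 => YY n 0 y
  | n+1, k+1, 0 => YY n k 1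
  | n+1, k+1, y+1 => YY n k (y+2) + YY n (k+1) y

lemma YY_zero (n k y : ℕ) (h : n < k) : YY n k y = 0 := by
  induction n generalizing k y with
  | zero => obtain ⟨k, rfl⟩ : ∃ l, k = l+1 := ⟨k-1, by omega⟩
            rfl
  | succ n ih =>
    obtain ⟨k, rfl⟩ : ∃ l, k = l+1 := ⟨k-1, by omega⟩
    cases y with
    | zero => simp only [YY]; exact ih _ _ (by omega)
    | succ y => simp only [YY]; rw [ih _ _ (by omega), ih _ _ (by omega)]

lemma NW_neg (n : ℕ) (p : Fin 2 → ℤ) (h : ¬ ∀ j, 0 ≤ p j) : NW n p = 0 := by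
  cases n with
  | zero => rw [NW_zero, if_neg h]
  | succ n => rw [NW_succ, if_neg h]

lemma NW_eq (n x y : ℕ) : NW n ![(x:ℤ), (y:ℤ)] = ∑ k ∈ range (n+1), YY n k y * XX k x := by
  induction n generalizing x y with
  | zero => rw [NW_zero]; simp [YY, XX, Fin.forall_fin_two]
  | succ n ih =>
    have h1 : NW n (![(x:ℤ), (y:ℤ)] + ![1, 1]) = ∑ k ∈ range (n+1), YY n k (y+1) * XX k (x+1) := by
      rw [← ih]; simp
    have h2 : NW n (![(x:ℤ), (y:ℤ)] + ![-1, 1]) = ∑ k ∈ range (n+1), YY n k (y+1) * (if x = 0 then 0 else XX k (x-1)) := by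
      cases x with
      | zero => rw [NW_neg]; simp
                simp [Fin.forall_fin_two]
      | succ x => simp only [Nat.add_sub_cancel, Nat.succ_ne_zero, if_false]; rw [← ih]; simp
    have h3 : NW n (![(x:ℤ), (y:ℤ)] + ![0, -1]) = ∑ k ∈ range (n+1), (if y = 0 then 0 else YY n k (y-1)) * XX k x := by
      cases y with
      | zero => rw [NW_neg]; simp
                simp [Fin.forall_fin_two]
      | succ y => simp only [Nat.add_sub_cancel, Nat.succ_ne_zero, if_false]; rw [← ih]; simp
    rw [NW_succ, if_pos (by simp [Fin.forall_fin_two]), h1, h2, h3]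
    have h4 : ∀ k, XX (k+1) x = XX k (x+1) + (if x = 0 then 0 else XX k (x-1)) := by
      intro k; cases x <;> simp [XX]
    have h5 : ∀ k, YY (n+1) (k+1) y = YY n k (y+1) + (if y = 0 then 0 else YY n (k+1) (y-1)) := by
      intro k; cases y <;> simp [YY]
    have h6 : YY (n+1) 0 y = (if y = 0 then 0 else YY n 0 (y-1)) := by
      cases y <;> simp [YY]
    rw [Finset.sum_range_succ' (fun k => YY (n+1) k y * XX k x) (n+1)]
    simp only [h5, add_mul, Finset.sum_add_distrib]
    have h7 : ∑ k ∈ range (n+1), (if y = 0 then 0 else YY n k (y-1)) * XX k x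
      = ∑ k ∈ range (n+2), (if y = 0 then 0 else YY n k (y-1)) * XX k x := by
      rw [Finset.sum_range_succ _ (n+1), YY_zero n (n+1) _ (by omega)]; simp
    rw [h7, Finset.sum_range_succ' _ (n+1), h6]
    simp only [h4, mul_add, Finset.sum_add_distrib]
    ring

lemma XX_closed (k x : ℕ) : XX k x = ∑ i ∈ range (k+1), k.choose i * (if k ≤ 2*i+x ∧ 2*i ≤ k+x+1 then 1 else 0) := by
  have pas : ∀ (k : ℕ) (f : ℕ → ℕ), ∑ i ∈ range (k+2), (k+1).choose i * f i
      = ∑ i ∈ range (k+1), k.choose i * (f i + f (i+1)) := by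
    intro k f
    rw [Finset.sum_range_succ']
    simp only [Nat.choose_succ_succ, add_mul, mul_add, Finset.sum_add_distrib]
    rw [Finset.sum_range_succ' (fun i => k.choose i * f i)]
    rw [Finset.sum_range_succ (fun i => k.choose (i+1) * f (i+1))]
    simp
    ring
  induction k generalizing x with
  | zero => simp [XX]
  | succ k ih =>
    rw [pas]
    cases x with
    | zero =>
      simp only [XX, ih]
      refine Finset.sum_congr rfl fun i _ => ?_
      congr 1
      split_ifs <;> omega
    | succ x =>
      simp only [XX, ih, ← Finset.sum_add_distrib, ← mul_add]
      refine Finset.sum_congr rfl fun i _ => ?_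
      congr 1
      split_ifs <;> omega

lemma XX_val (k : ℕ) : XX k 0 = k.choose (k/2) := by
  rw [XX_closed, Finset.sum_eq_single ((k+1)/2)]
  · rw [if_pos (by omega), mul_one]
    rw [← Nat.choose_symm (by omega)]
    congr 1; omega
  · intro i _ hi
    rw [if_neg (by omega), mul_zero]
  · intro h; simp at h; omega

lemma YY_low (n k y : ℕ) (h : y + 2*k < n) : YY n k y = 0 := by
  induction n generalizing k y with
  | zero => omega
  | succ n ih =>
    rcases k with _ | k <;> rcases y with _ | y <;> simp only [YY]
    · exact ih _ _ (by omega)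
    · exact ih _ _ (by omega)
    · rw [ih _ _ (by omega), ih _ _ (by omega)]

lemma YY_high (n k y : ℕ) (h : n ≤ y + 2*k + 1) : (YY n k y : ℤ) = n.choose k - n.choose (k+y+1) := by
  induction n generalizing k y with
  | zero => rcases k with _ | k <;> simp [YY]
  | succ n ih =>
    rcases k with _ | k <;> rcases y with _ | y <;> simp only [YY]
    · obtain rfl : n = 0 := by omega
      simp
    · rw [ih _ _ (by omega), show 0 + (y+1) + 1 = (y+1)+1 by ring, Nat.choose_succ_succ n (y+1),
        Nat.choose_eq_zero_of_lt (show n < (y+1).succ by omega)]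
      simp
    · rw [ih _ _ (by omega), show k + 1 + 0 + 1 = (k+1)+1 by ring, Nat.choose_succ_succ n (k+1),
        Nat.choose_succ_succ n k]
      push_cast
      simp only [Nat.succ_eq_add_one]
      ring
    · push_cast
      rw [ih _ _ (by omega), ih _ _ (by omega), show k + 1 + (y+1) + 1 = (k+y+2)+1 by ring,
        Nat.choose_succ_succ n k, Nat.choose_succ_succ n (k+y+2),
        show k + (y+2)+1 = k+y+2+1 by ring, show k+1+y+1=k+y+2 by ring]
      push_cast
      simp only [Nat.succ_eq_add_one]
      ring

/-- combinatorial formula -/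
lemma YY_main (n k : ℕ) : (YY n k 0 : ℝ) = n.choose k * (max 0 (2*(k:ℝ)-n+1) / (k+1)) := by
  by_cases h : n ≤ 2*k+1
  · have h1 := YY_high n k 0 (by omega)
    have h2 : (YY n k 0 : ℝ) = n.choose k - n.choose (k+1) := by exact_mod_cast h1
    have h3 : (n.choose (k+1) : ℝ) * (k+1) = n.choose k * (n - k) := by
      rcases le_or_gt k n with hk | hk
      · have := Nat.choose_succ_right_eq n k
        rw [← Nat.cast_sub hk]
        exact_mod_cast this
      · rw [Nat.choose_eq_zero_of_lt hk, Nat.choose_eq_zero_of_lt (by omega)]; simp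
    have h4 : (n:ℝ) ≤ 2*k+1 := by exact_mod_cast h
    rw [h2, max_eq_right (by linarith)]
    have : (k:ℝ)+1 ≠ 0 := by positivity
    field_simp
    linarith
  · rw [YY_low _ _ _ (by omega), max_eq_left]
    · simp
    · have : (2*k+1:ℝ) ≤ n := by exact_mod_cast (not_le.1 h).le
      linarith

lemma numWalks_formula (n : ℕ) :
    (numWalks 2 ({![-1, 1], ![1, 1], ![0, -1]} : Finset (Fin 2 → ℤ)) n : ℝ) =
    ∑ k ∈ range (n+1), n.choose k * (max 0 (2*(k:ℝ)-n+1) / (k+1)) * k.choose (k/2) := by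
  have h : numWalks 2 ({![-1, 1], ![1, 1], ![0, -1]} : Finset (Fin 2 → ℤ)) n = NW n ![((0:ℕ):ℤ), ((0:ℕ):ℤ)] := by
    unfold numWalks NW NWS
    congr 1
    ext f
    simp [Fin.forall_fin_two]
  rw [h, NW_eq]
  push_cast
  refine Finset.sum_congr rfl fun k _ => ?_
  rw [YY_main, XX_val]

def bb (k : ℕ) : ℝ := (k.choose (k/2) : ℝ) / 2^k

lemma bb_even : Tendsto (fun m : ℕ => √(2*m:ℝ) * bb (2*m)) atTop (nhds √(2/π)) := by
  have h1 := Stirling.tendsto_stirlingSeq_sqrt_pi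
  have h2 : Tendsto (fun m : ℕ => 2*m) atTop atTop := tendsto_id.const_mul_atTop' (by norm_num)
  have h3 := ((h1.comp h2).div (h1.pow 2) (by positivity)).const_mul √2
  have e : √2 * (√π / √π^2) = √(2/π) := by
    rw [Real.sqrt_div (by norm_num)]
    have : √π ≠ 0 := by positivity
    field_simp
  rw [e] at h3
  refine h3.congr' ?_
  filter_upwards [eventually_gt_atTop 0] with m hm
  have hm' : (0:ℝ) < m := by exact_mod_cast hm
  have hc : ((2*m).choose m : ℝ) = (2*m).factorial / (m.factorial * m.factorial) := by
    rw [Nat.cast_choose ℝ (by omega : m ≤ 2*m)]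
    congr 3
    congr 1
    omega
  simp only [Function.comp, Stirling.stirlingSeq, bb, Pi.div_apply]
  rw [show 2*m/2 = m by omega, hc]
  push_cast
  have s1 : √(2*(2*m:ℝ)) = 2 * √m := by
    rw [show (2*(2*m:ℝ)) = 2^2 * m by ring, Real.sqrt_mul (by norm_num), Real.sqrt_sq (by norm_num)]
  have s2 : √(2*m:ℝ) = √2 * √m := by
    rw [Real.sqrt_mul (by norm_num)]
  have s3 : √(m:ℝ) ^ 2 = m := Real.sq_sqrt hm'.le
  have s4 : √(2:ℝ) ^ 2 = 2 := Real.sq_sqrt (by norm_num)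
  have p1 : (0:ℝ) < √m := by positivity
  have p2 : (0:ℝ) < √2 := by positivity
  have p3 : (0:ℝ) < m.factorial := by positivity
  rw [s1, s2]
  have p4 : (2*(m:ℝ)/Real.exp 1)^(2*m) = 2^(2*m) * ((m/Real.exp 1)^m)^2 := by
    rw [mul_div_assoc, mul_pow, ← pow_mul, mul_comm m 2]
  rw [p4]
  have p5 : (0:ℝ) < (m/Real.exp 1)^m := by positivity
  set E := ((m:ℝ)/Real.exp 1)^m
  set A := √(m:ℝ)
  set B := √(2:ℝ)
  field_simp
  linear_combination (norm := skip) s4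
  ring_nf

lemma bb_half (k : ℕ) : bb k = bb (2*((k+1)/2)) := by
  rcases Nat.even_or_odd' k with ⟨m, rfl | rfl⟩
  · congr 1; omega
  · rw [show (2*m+1+1)/2 = m+1 by omega]
    unfold bb
    rw [show (2*m+1)/2 = m by omega, show 2*(m+1)/2 = m+1 by omega,
      show 2*(m+1) = (2*m+1)+1 by ring, Nat.choose_succ_succ (2*m+1) m,
      show (2*m+1).choose (m.succ) = (2*m+1).choose m by
        rw [← Nat.choose_symm (by omega)]; congr 1; omega]
    push_cast
    rw [pow_succ _ (2*m+1)]
    field_simp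
    ring

lemma bb_lim : Tendsto (fun k : ℕ => √(k:ℝ) * bb k) atTop (nhds √(2/π)) := by
  have h2 : Tendsto (fun k : ℕ => (k+1)/2) atTop atTop := by
    refine tendsto_atTop.2 fun b => ?_
    filter_upwards [eventually_ge_atTop (2*b)] with k hk
    omega
  have h3 := bb_even.comp h2
  have h4 : Tendsto (fun k : ℕ => (k:ℝ) / (2*(((k+1)/2 : ℕ):ℝ))) atTop (nhds 1) := by
    refine tendsto_of_tendsto_of_tendsto_of_le_of_le' (tendsto_natCast_div_add_atTop (1:ℝ)) tendsto_const_nhds ?_ ?_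
    · filter_upwards [eventually_gt_atTop 0] with k hk
      have a : 2*(((k+1)/2 : ℕ):ℝ) ≤ k + 1 := by
        have : 2*((k+1)/2) ≤ k+1 := by omega
        exact_mod_cast this
      have b : 0 < (((k+1)/2 : ℕ):ℝ) := by
        have : 0 < ((k+1)/2) := by omega
        exact_mod_cast this
      gcongr
    · filter_upwards [eventually_gt_atTop 0] with k hk
      have b : 0 < (((k+1)/2 : ℕ):ℝ) := by
        have : 0 < ((k+1)/2) := by omega
        exact_mod_cast this
      have a : (k:ℝ) ≤ 2*(((k+1)/2 : ℕ):ℝ) := by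
        have : k ≤ 2*((k+1)/2) := by omega
        exact_mod_cast this
      rw [div_le_one (by positivity)]
      exact a
  have h5 := (h4.sqrt).mul h3
  rw [Real.sqrt_one, one_mul] at h5
  refine h5.congr' ?_
  filter_upwards [eventually_gt_atTop 0] with k hk
  have b : 0 < (((k+1)/2 : ℕ):ℝ) := by
    have : 0 < ((k+1)/2) := by omega
    exact_mod_cast this
  simp only [Function.comp]
  rw [← bb_half, Real.sqrt_div (by positivity)]
  have : √(2*(((k+1)/2 : ℕ):ℝ)) ≠ 0 := by positivity
  field_simp

def hh (t : ℝ) : ℝ := max 0 (2*t-1) / max t (1/2) * (√(2/π) / √(max t (1/2)))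

lemma hh_cont : Continuous hh := by
  unfold hh
  have a : ∀ t : ℝ, max t (1/2) ≠ 0 := fun t => by positivity
  have b : ∀ t : ℝ, √(max t (1/2)) ≠ 0 := fun t => by positivity
  fun_prop (disch := assumption)

def FF (n k : ℕ) : ℝ := √n * (max 0 (2*(k:ℝ)-n+1) / (k+1)) * bb k

lemma FF_err (ε : ℝ) (hε : 0 < ε) : ∀ᶠ n : ℕ in atTop, ∀ k ≤ n, |FF n k - hh (k/n)| ≤ ε := by
  have hc1 : √(2/π) ≤ 1 := by
    rw [Real.sqrt_le_left (by norm_num), one_pow, div_le_one Real.pi_pos]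
    linarith [Real.pi_gt_three]
  have hc0 : 0 ≤ √(2/π) := Real.sqrt_nonneg _
  set c := √(2/π) with hc
  obtain ⟨K, hK⟩ := Metric.tendsto_atTop.1 bb_lim (min 1 (ε/4)) (by positivity)
  obtain ⟨N, hN⟩ := exists_nat_gt (16/ε)
  filter_upwards [eventually_ge_atTop (2*K+N+1)] with n hn k hk
  have hn0 : (0:ℝ) < n := by exact_mod_cast (by omega : 0 < n)
  have hkn : (k:ℝ) ≤ n := by exact_mod_cast hk
  rcases lt_or_ge (2*k) n with h | h
  · have h1 : (2*k+1:ℝ) ≤ n := by exact_mod_cast h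
    have h2 : 2*((k:ℝ)/n) - 1 ≤ 0 := by
      rw [sub_nonpos, ← mul_div_assoc, div_le_one hn0]; linarith
    unfold FF hh
    rw [max_eq_left (by linarith), max_eq_left h2]
    simp [hε.le]
  · have h1 : (n:ℝ) ≤ 2*k := by exact_mod_cast h
    have hk0 : (0:ℝ) < k := by linarith
    have hu := hK k (by omega)
    rw [Real.dist_eq, ← hc] at hu
    set u := √(k:ℝ) * bb k with hu'
    have hF : FF n k = √(n/k:ℝ) * ((2*(k:ℝ)-n+1)/(k+1) * u) := by
      unfold FF
      rw [max_eq_right (by linarith), Real.sqrt_div hn0.le, hu']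
      have : √(k:ℝ) ≠ 0 := by positivity
      field_simp
    have hH : hh (k/n) = √(n/k:ℝ) * ((2*(k:ℝ)-n)/k * c) := by
      unfold hh
      have g : (1/2:ℝ) ≤ k/n := by rw [div_le_div_iff₀ (by norm_num) hn0]; linarith
      rw [max_eq_right (by linarith), max_eq_left g, Real.sqrt_div hk0.le, Real.sqrt_div hn0.le, ← hc]
      have : √(k:ℝ) ≠ 0 := by positivity
      have : √(n:ℝ) ≠ 0 := by positivity
      field_simp
    have hs : √(n/k:ℝ) ≤ 2 := by
      rw [Real.sqrt_le_left (by norm_num), div_le_iff₀ hk0]; linarith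
    have hq : |(2*(k:ℝ)-n+1)/(k+1) - (2*(k:ℝ)-n)/k| ≤ 2/n := by
      have : (2*(k:ℝ)-n+1)/(k+1) - (2*(k:ℝ)-n)/k = (n-k)/(k*(k+1)) := by
        field_simp; ring
      rw [this, abs_of_nonneg (div_nonneg (by linarith) (by positivity)), div_le_div_iff₀ (by positivity) hn0]
      nlinarith
    have hQ : |(2*(k:ℝ)-n)/k| ≤ 1 := by
      rw [abs_of_nonneg (div_nonneg (by linarith) hk0.le), div_le_one hk0]; linarith
    have hu2 : |u| ≤ 2 := by
      have : |u - c| < 1 := hu.trans_le (min_le_left _ _)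
      rw [abs_lt] at this
      rw [abs_le]; constructor <;> linarith
    have hu3 : |u - c| ≤ ε/4 := (hu.trans_le (min_le_right _ _)).le
    have hNn : 16/ε ≤ n := hN.le.trans (by exact_mod_cast (by omega : N ≤ n))
    have hne : 4/(n:ℝ) ≤ ε/4 := by
      rw [div_le_iff₀ hε] at hNn
      rw [div_le_div_iff₀ hn0 (by norm_num)]; linarith
    rw [hF, hH, ← mul_sub, abs_mul, abs_of_nonneg (Real.sqrt_nonneg _)]
    set Q' := (2*(k:ℝ)-n+1)/(k+1)
    set Q := (2*(k:ℝ)-n)/k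
    have t : |Q' * u - Q * c| ≤ ε/2 := by
      calc |Q' * u - Q * c| = |(Q'-Q)*u + Q*(u-c)| := by congr 1; ring
        _ ≤ |(Q'-Q)*u| + |Q*(u-c)| := abs_add_le _ _
        _ = |Q'-Q| * |u| + |Q| * |u-c| := by rw [abs_mul (Q'-Q) u, abs_mul Q (u-c)]
        _ ≤ 2/n*2 + 1*(ε/4) := by gcongr
        _ = 4/n + ε/4 := by ring
        _ ≤ ε/2 := by linarith
    calc √(n/k:ℝ) * |Q' * u - Q * c| ≤ 2 * (ε/2) := by gcongr
      _ = ε := by ring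

def tt : unitInterval := ⟨2/3, by norm_num, by norm_num⟩

lemma tt_lim : Tendsto (fun n : ℕ => ∑ k : Fin (n+1), bernstein n k tt * hh ((k:ℝ)/n)) atTop (nhds (hh (2/3))) := by
  have h := bernsteinApproximation_uniform (⟨fun x : unitInterval => hh x, hh_cont.comp continuous_subtype_val⟩ : C(unitInterval, ℝ))
  have h2 := ((continuous_eval_const (F := C(unitInterval, ℝ)) tt).tendsto _).comp h
  refine (h2.congr fun n => ?_)
  simp only [Function.comp]
  rw [bernsteinApproximation.apply]
  rfl

lemma FF_lim : Tendsto (fun n : ℕ => ∑ k : Fin (n+1), bernstein n k tt * FF n k) atTop (nhds (hh (2/3))) := by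
  have h0 : Tendsto (fun n : ℕ => ∑ k : Fin (n+1), bernstein n k tt * (FF n k - hh ((k:ℝ)/n))) atTop (nhds 0) := by
    rw [Metric.tendsto_nhds]
    intro ε hε
    filter_upwards [FF_err (ε/2) (by positivity)] with n hn
    rw [Real.dist_eq, sub_zero]
    calc |∑ k : Fin (n+1), bernstein n k tt * (FF n k - hh ((k:ℝ)/n))|
        ≤ ∑ k : Fin (n+1), |bernstein n k tt * (FF n k - hh ((k:ℝ)/n))| := Finset.abs_sum_le_sum_abs _ _
      _ ≤ ∑ k : Fin (n+1), bernstein n k tt * (ε/2) := by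
        refine Finset.sum_le_sum fun k _ => ?_
        rw [abs_mul, abs_of_nonneg bernstein_nonneg]
        exact mul_le_mul_of_nonneg_left (hn k (by omega)) bernstein_nonneg
      _ = ε/2 := by rw [← Finset.sum_mul, bernstein.probability, one_mul]
      _ < ε := by linarith
  have := h0.add tt_lim
  rw [zero_add] at this
  refine this.congr fun n => ?_
  rw [← Finset.sum_add_distrib]
  refine Finset.sum_congr rfl fun k _ => ?_
  ring

lemma hh_val : hh (2/3) = √3 / (2*√π) := by
  unfold hh
  rw [max_eq_left (by norm_num : (1/2:ℝ) ≤ 2/3), max_eq_right (by norm_num), Real.sqrt_div (by norm_num), Real.sqrt_div (by norm_num)]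
  have : √π ≠ 0 := by positivity
  field_simp
  norm_num

lemma walks_bern (n : ℕ) :
    √n * (numWalks 2 ({![-1, 1], ![1, 1], ![0, -1]} : Finset (Fin 2 → ℤ)) n : ℝ) / 3^n =
    ∑ k : Fin (n+1), bernstein n k tt * FF n k := by
  rw [numWalks_formula, Finset.sum_range, Finset.mul_sum, Finset.sum_div]
  refine Finset.sum_congr rfl fun k _ => ?_
  rw [bernstein_apply]
  have hk : (k:ℕ) ≤ n := by omega
  have h3 : (3:ℝ)^n = 3^(k:ℕ) * 3^(n-k) := by rw [← pow_add]; congr 1; omega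
  have : (tt : ℝ) = 2/3 := rfl
  rw [this, show (1 - 2/3:ℝ) = 1/3 by norm_num, div_pow, div_pow, one_pow, h3]
  unfold FF bb
  field_simp

/-- For the step set `{(-1,1), (1,1), (0,-1)}` in `ℤ²`, the number of quarter-plane
walks satisfies `s_n ∼ (√3/(2√π))·3^n/√n`. -/
theorem positive_drift_example_asymptotics :
    Tendsto (fun n : ℕ =>
      (numWalks 2 ({![-1, 1], ![1, 1], ![0, -1]} : Finset (Fin 2 → ℤ)) n : ℝ) /
        ((Real.sqrt 3 / (2 * Real.sqrt π)) * 3 ^ n / Real.sqrt n))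
      atTop (nhds 1) := by
  have h := FF_lim
  rw [hh_val] at h
  have hc : √3 / (2*√π) ≠ 0 := by positivity
  have h2 := h.div_const (√3 / (2*√π))
  rw [div_self hc] at h2
  refine h2.congr' ?_
  filter_upwards [eventually_gt_atTop 0] with n hn
  have hn' : (0:ℝ) < n := by exact_mod_cast hn
  have : √(n:ℝ) ≠ 0 := by positivity
  rw [← walks_bern]
  field_simp

end
end
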